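/- Let (X,ρ,μ) be a space of homogeneous type satisfying the weak reverse doubling (WRD) condition, let Ω ⊆ X be an open set satisfying the weak measure density (WMD) condition, let 0 < q < p < ∞, and let φ ∈ 𝒢^dec_p satisfy the nearness condition and ∫_r^∞ φ(x,t)/t dt ≤ C_φ·φ(x,r) for all x ∈ X and r > 0. Assume either that there is C̃_φ ∈ [1,∞) with 1/C̃_φ ≤ φ(B)·μ(B)^{1/p} ≤ C̃_φ for every ball B, or that both lim_{r→0⁺} inf_{x∈B} φ(x,r) = ∞ for every ball B and lim_{r→∞} φ(x,r)·μ(B(x,r))^{1/p} = ∞ for every x ∈ X. Then there exist positive constants C and C̃ such that for every measurable f on Ω with inf_{a∈ℝ} ‖f+a‖_{L_{p,φ}(Ω)} < ∞ and with ‖(∫_Ω |f(·)−f(y)|^q/(U(·,y)·ρ(·,y)^{s₀q}) dμ(y))^{1/q}‖_{L_{p,φ}(Ω)} < ∞ for some s₀ ∈ (0,1), one has C·inf_{a∈ℝ}‖f+a‖_{L_{p,φ}(Ω)} ≤ liminf_{s→0⁺} s^{1/q}‖(∫_Ω |f(·)−f(y)|^q/(U(·,y)·ρ(·,y)^{sq})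 dμ(y))^{1/q}‖_{L_{p,φ}(Ω)} ≤ limsup_{s→0⁺} s^{1/q}‖(∫_Ω |f(·)−f(y)|^q/(U(·,y)·ρ(·,y)^{sq}) dμ(y))^{1/q}‖_{L_{p,φ}(Ω)} ≤ C̃·inf_{a∈ℝ}‖f+a‖_{L_{p,φ}(Ω)}. -/

import Mathlib

noncomputable section

open MeasureTheory Filter Set
open scoped ENNReal NNReal Topology

namespace Paper

variable {X : Type*} [MeasurableSpace X]

/-- The ball with center `x` and radius `r` for the quasi-metric `ρ`. -/
def ball (ρ : X → X → ℝ) (x : X) (r : ℝ) : Set X := {y | ρ x y < r}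

/-- `(X, ρ, μ)` is a quasi-metric measure space with quasi-triangle constant `K₀`:
`ρ` is a quasi-metric with constant `K₀` and all `ρ`-balls are `μ`-measurable. -/
structure IsQuasiMetricMeasure (ρ : X → X → ℝ) (μ : Measure X) (K₀ : ℝ) : Prop where
  nonneg : ∀ x y, 0 ≤ ρ x y
  eq_zero_iff : ∀ x y, ρ x y = 0 ↔ x = y
  symm : ∀ x y, ρ x y = ρ y x
  one_le : 1 ≤ K₀
  triangle : ∀ x y z, ρ x z ≤ K₀ * (ρ x y + ρ y z)
  measurableSet_ball : ∀ x r, MeasurableSet (ball ρ x r)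

/-- The doubling condition for `μ` with doubling constant `L ∈ [1, ∞)`. -/
def IsDoubling (ρ : X → X → ℝ) (μ : Measure X) (L : ℝ≥0∞) : Prop :=
  1 ≤ L ∧ L < ∞ ∧ ∀ (x : X) (r : ℝ), 0 < r →
    0 < μ (ball ρ x r) ∧ μ (ball ρ x (2 * r)) ≤ L * μ (ball ρ x r) ∧ μ (ball ρ x r) < ∞

/-- `U(x,y) := min{μ(B(x,ρ(x,y))), μ(B(y,ρ(x,y)))}`. -/
def U (ρ : X → X → ℝ) (μ : Measure X) (x y : X) : ℝ≥0∞ :=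
  min (μ (ball ρ x (ρ x y))) (μ (ball ρ y (ρ x y)))

/-- The weak reverse doubling (WRD) condition. -/
def WRD (ρ : X → X → ℝ) (μ : Measure X) : Prop :=
  ∃ (x₀ : X) (lam C : ℝ), 1 < lam ∧ 1 < C ∧
    ENNReal.ofReal C ≤
      liminf (fun r : ℝ => μ (ball ρ x₀ (lam * r)) / μ (ball ρ x₀ r)) atTop

/-- The weak measure density (WMD) condition for `Ω`. -/
def WMD (ρ : X → X → ℝ) (μ : Measure X) (Ω : Set X) : Prop :=
  ∃ (x₀ : X) (C₀ : ℝ), 0 < C₀ ∧ C₀ ≤ 1 ∧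
    ENNReal.ofReal C₀ ≤
      liminf (fun r : ℝ => μ (ball ρ x₀ r ∩ Ω) / μ (ball ρ x₀ r)) atTop

/-- `Ω` is open with respect to the quasi-metric `ρ`. -/
def IsRhoOpen (ρ : X → X → ℝ) (Ω : Set X) : Prop :=
  ∀ x ∈ Ω, ∃ r : ℝ, 0 < r ∧ ball ρ x r ⊆ Ω

/-- The Maz'ya–Shaposhnikova integrand on a set `E`:
`x ↦ (∫_E |f(x) − f(y)|^q / (U(x,y) ρ(x,y)^{sq}) dμ(y))^{1/q}`. -/
def sob (ρ : X → X → ℝ) (μ : Measure X) (E : Set X) (f : X → ℝ) (q s : ℝ) (x : X) :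
    ℝ≥0∞ :=
  (∫⁻ y in E, ENNReal.ofReal |f x - f y| ^ q /
      (U ρ μ x y * ENNReal.ofReal (ρ x y) ^ (s * q)) ∂μ) ^ (1 / q)

/-- The generalized Morrey quasi-norm `‖g‖_{L_{p,φ}(X)}`. -/
def morreyNorm (ρ : X → X → ℝ) (μ : Measure X) (p : ℝ) (φ : X → ℝ → ℝ)
    (g : X → ℝ≥0∞) : ℝ≥0∞ :=
  ⨆ (x : X) (r : ℝ) (_ : 0 < r),
    ((∫⁻ y in ball ρ x r, g y ^ p ∂μ) / μ (ball ρ x r)) ^ (1 / p) /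
      ENNReal.ofReal (φ x r)

/-- `φ` takes values in `(0,∞)`. -/
def PhiPos (φ : X → ℝ → ℝ) : Prop := ∀ (x : X) (r : ℝ), 0 < r → 0 < φ x r

/-- The nearness condition for `φ`. -/
def Nearness (ρ : X → X → ℝ) (φ : X → ℝ → ℝ) : Prop :=
  ∃ C : ℝ, 1 ≤ C ∧ ∀ (x y : X) (r : ℝ), 0 < r → ρ x y ≤ r → φ x r ≤ C * φ y r

/-- `φ ∈ 𝒢^dec_p`: `r ↦ μ(B(x,r))^{1/p}φ(x,r)` is almost increasing and
`r ↦ φ(x,r)` is almost decreasing. -/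
def GdecP (ρ : X → X → ℝ) (μ : Measure X) (p : ℝ) (φ : X → ℝ → ℝ) : Prop :=
  ∃ C : ℝ, 1 ≤ C ∧ ∀ (x : X) (r s : ℝ), 0 < r → r ≤ s →
    μ (ball ρ x r) ^ (1 / p) * ENNReal.ofReal (φ x r) ≤
        ENNReal.ofReal C * (μ (ball ρ x s) ^ (1 / p) * ENNReal.ofReal (φ x s)) ∧
      φ x s ≤ C * φ x r

/-- The integral condition `∫_r^∞ φ(x,t)/t dt ≤ C_φ φ(x,r)`. -/
def PhiIntCond (φ : X → ℝ → ℝ) (Cφ : ℝ) : Prop :=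
  ∀ (x : X) (r : ℝ), 0 < r →
    IntegrableOn (fun t => φ x t / t) (Set.Ioi r) volume ∧
    (∫ t in Set.Ioi r, φ x t / t) ≤ Cφ * φ x r

/-!
Lower bound. By weak reverse doubling and weak measure density, `Ω` fills a fixed proportion of each
large annulus `R Λ ^ k ≤ ρ(x₁, ·) < R Λ ^ (k + 1)`. For fixed `x`, average
`|f x| ^ q ≲ |f x - f y| ^ q + |f y| ^ q` over `y` in the part of `Ω` in such an annulus: since
`φ(x₁, r) → 0`, the mean of `|f| ^ q` over large balls tends to zero. Summing over `k` with the
weights `Λ ^ (-k s q)`, whose total is about `1 / (s q log Λ)`, bounds `|f x|` by a constant times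
the limit of `s ^ (1 / q)` times the fractional seminorm at `x` as `s → 0⁺`.

Upper bound. The part `ρ(x, y) ≤ 1` of the seminorm is at most its value at the exponent `s₀`, which
the factor `s ^ (1 / q)` kills. On `ρ(x, y) ≥ 1` the kernel is dominated by a superposition of
averaging kernels at the scales `2 ^ k` with weights `2 ^ (-k s q)`, of total mass about `1 / s`.
Such averages are bounded on the Morrey space: near a given ball by Schur's test, and away from it
because `φ` is almost decreasing.
-/

section IntegralInequalities

lemma add_rpow_le_two_rpow_mul (a b : ℝ≥0∞) {q : ℝ} (hq : 0 ≤ q) :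
    (a + b) ^ q ≤ 2 ^ q * (a ^ q + b ^ q) := by
  have hmax : a + b ≤ 2 * max a b := by
    rw [two_mul]
    exact add_le_add (le_max_left a b) (le_max_right a b)
  calc (a + b) ^ q ≤ (2 * max a b) ^ q := by gcongr
    _ = 2 ^ q * max (a ^ q) (b ^ q) := by
        rw [ENNReal.mul_rpow_of_nonneg _ _ hq, (ENNReal.monotone_rpow_of_nonneg hq).map_max]
    _ ≤ 2 ^ q * (a ^ q + b ^ q) := by gcongr; exact max_le_add_of_nonneg zero_le zero_le

lemma lintegral_rpow_le_rpow_measure_mul_lintegral_rpow {α : Type*} [MeasurableSpace α]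
    {ν : Measure α} {t : ℝ} (ht : 1 ≤ t) {g : α → ℝ≥0∞} (hg : Measurable g) :
    (∫⁻ x, g x ∂ν) ^ t ≤ ν univ ^ (t - 1) * ∫⁻ x, g x ^ t ∂ν := by
  have ht0 : 0 < t := one_pos.trans_le ht
  have h := eLpNorm'_le_eLpNorm'_mul_rpow_measure_univ one_pos ht hg.aestronglyMeasurable
    (μ := ν)
  simp only [eLpNorm', enorm_eq_self, ENNReal.rpow_one, div_one] at h
  calc (∫⁻ x, g x ∂ν) ^ t
      ≤ ((∫⁻ x, g x ^ t ∂ν) ^ (1 / t) * ν univ ^ (1 - 1 / t)) ^ t := by gcongr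
    _ = ν univ ^ (t - 1) * ∫⁻ x, g x ^ t ∂ν := by
        rw [ENNReal.mul_rpow_of_nonneg _ _ ht0.le, ← ENNReal.rpow_mul, ← ENNReal.rpow_mul,
          one_div_mul_cancel ht0.ne', ENNReal.rpow_one, mul_comm]
        congr 2
        field_simp

lemma lintegral_rpow_le_of_schur_test {α : Type*} [MeasurableSpace α] {ν : Measure α}
    [SFinite ν] {K : α → α → ℝ≥0∞} (hK : Measurable (Function.uncurry K)) {A : ℝ≥0∞}
    (hA : A ≠ ⊤) (hrow : ∀ x, ∫⁻ y, K x y ∂ν ≤ A) (hcol : ∀ y, ∫⁻ x, K x y ∂ν ≤ A) {t : ℝ}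
    (ht : 1 ≤ t) {h : α → ℝ≥0∞} (hh : Measurable h) :
    ∫⁻ x, (∫⁻ y, K x y * h y ∂ν) ^ t ∂ν ≤ A ^ t * ∫⁻ x, h x ^ t ∂ν := by
  have hht : Measurable fun y => h y ^ t := hh.pow_const t
  have hrow_jensen (x : α) :
      (∫⁻ y, K x y * h y ∂ν) ^ t ≤ A ^ (t - 1) * ∫⁻ y, K x y * h y ^ t ∂ν := by
    have hKx : Measurable (K x) := hK.of_uncurry_left
    have hjensen := lintegral_rpow_le_rpow_measure_mul_lintegral_rpow
      (ν := ν.withDensity (K x)) ht hh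
    simp only [lintegral_withDensity_eq_lintegral_mul _ hKx hh,
      lintegral_withDensity_eq_lintegral_mul _ hKx hht, withDensity_apply _ MeasurableSet.univ,
      Measure.restrict_univ, Pi.mul_apply] at hjensen
    exact hjensen.trans (by gcongr; exact hrow x)
  have hAt : A ^ (t - 1) ≠ ⊤ := ENNReal.rpow_ne_top_of_nonneg (by linarith) hA
  calc ∫⁻ x, (∫⁻ y, K x y * h y ∂ν) ^ t ∂ν
      ≤ ∫⁻ x, A ^ (t - 1) * ∫⁻ y, K x y * h y ^ t ∂ν ∂ν := lintegral_mono hrow_jensen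
    _ = A ^ (t - 1) * ∫⁻ y, (∫⁻ x, K x y ∂ν) * h y ^ t ∂ν := by
        rw [lintegral_const_mul' _ _ hAt, lintegral_lintegral_swap
          (hK.mul (hht.comp measurable_snd)).aemeasurable]
        congr 1
        exact lintegral_congr fun y => lintegral_mul_const _ hK.of_uncurry_right
    _ ≤ A ^ (t - 1) * ∫⁻ y, A * h y ^ t ∂ν := by gcongr with y; exact hcol y
    _ = A ^ t * ∫⁻ x, h x ^ t ∂ν := by
        rw [lintegral_const_mul' _ _ hA, ← mul_assoc, mul_comm _ A]
        nth_rw 1 [← ENNReal.rpow_one A]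
        rw [← ENNReal.rpow_add_of_nonneg _ _ zero_le_one (by linarith), add_sub_cancel]

end IntegralInequalities

section GeometricSeries

lemma tsum_ofReal_mul_pow_rpow_neg {A Λ σ : ℝ} (hA : 0 < A) (hΛ : 1 < Λ) (hσ : 0 < σ) :
    ∑' k : ℕ, ENNReal.ofReal (A * Λ ^ k) ^ (-σ) =
      ENNReal.ofReal (A ^ (-σ) * (1 - Λ ^ (-σ))⁻¹) := by
  have hΛ0 : 0 < Λ := one_pos.trans hΛ
  have hratio : Λ ^ (-σ) < 1 := Real.rpow_lt_one_of_one_lt_of_neg hΛ (neg_neg_of_pos hσ)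
  have hterm (k : ℕ) : ENNReal.ofReal (A * Λ ^ k) ^ (-σ) =
      ENNReal.ofReal (A ^ (-σ)) * ENNReal.ofReal (Λ ^ (-σ)) ^ k := by
    rw [ENNReal.ofReal_rpow_of_pos (by positivity), ← ENNReal.ofReal_pow (by positivity),
      ← ENNReal.ofReal_mul (by positivity), Real.mul_rpow hA.le (by positivity),
      Real.rpow_pow_comm hΛ0.le]
  simp only [hterm]
  rw [ENNReal.tsum_mul_left, ENNReal.tsum_geometric, ENNReal.ofReal_mul (by positivity),
    ENNReal.ofReal_inv_of_pos (sub_pos.2 hratio), ENNReal.ofReal_sub _ (by positivity),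
    ENNReal.ofReal_one]

lemma tendsto_mul_inv_one_sub_rpow_neg {Λ q : ℝ} (hΛ : 1 < Λ) (hq : 0 < q) :
    Tendsto (fun s : ℝ => s * (1 - Λ ^ (-(s * q)))⁻¹) (𝓝[>] 0) (𝓝 (q * Real.log Λ)⁻¹) := by
  have hderiv : HasDerivAt (fun s : ℝ => Λ ^ (-(s * q))) (-(q * Real.log Λ)) 0 := by
    have hexp : HasDerivAt (fun s : ℝ => -(s * q)) (-q) 0 := by
      simpa using ((hasDerivAt_id (0 : ℝ)).mul_const q).fun_neg
    simpa [mul_comm] using hexp.const_rpow (one_pos.trans hΛ)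
  have hslope := (hasDerivAt_iff_tendsto_slope_zero.1 hderiv).mono_left
    (nhdsGT_le_nhdsNE 0)
  have hlim := hslope.neg.inv₀ (by simp [hq.ne', (Real.log_pos hΛ).ne'])
  simp only [zero_add, zero_mul, neg_zero, Real.rpow_zero, smul_eq_mul, neg_neg] at hlim
  refine hlim.congr fun s => ?_
  rw [← mul_neg, neg_sub, mul_inv, inv_inv]

lemma tendsto_mul_tsum_mul_pow_rpow_neg {A Λ q : ℝ} (hA : 0 < A) (hΛ : 1 < Λ) (hq : 0 < q) :
    Tendsto (fun s : ℝ => ENNReal.ofReal s * ∑' k : ℕ, ENNReal.ofReal (A * Λ ^ k) ^ (-(s * q)))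
      (𝓝[>] 0) (𝓝 (ENNReal.ofReal (q * Real.log Λ)⁻¹)) := by
  have hconst : Tendsto (fun s : ℝ => A ^ (-(s * q))) (𝓝[>] 0) (𝓝 1) := by
    have hcont : Continuous fun s : ℝ => A ^ (-(s * q)) :=
      Real.continuous_const_rpow hA.ne' |>.comp (by fun_prop)
    simpa using (hcont.tendsto 0).mono_left nhdsWithin_le_nhds
  have hlim := ENNReal.tendsto_ofReal (hconst.mul (tendsto_mul_inv_one_sub_rpow_neg hΛ hq))
  rw [one_mul] at hlim
  refine hlim.congr' ?_
  filter_upwards [self_mem_nhdsWithin] with s hs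
  rw [tsum_ofReal_mul_pow_rpow_neg hA hΛ (mul_pos hs hq), ← ENNReal.ofReal_mul (le_of_lt hs),
    mul_left_comm]

end GeometricSeries

variable {ρ : X → X → ℝ} {μ : Measure X} {K₀ : ℝ} {L : ℝ≥0∞} {φ : X → ℝ → ℝ}

section Doubling

lemma mem_ball {α : Type*} {ρ : α → α → ℝ} {x y : α} {r : ℝ} : y ∈ ball ρ x r ↔ ρ x y < r := Iff.rfl

lemma ball_mono {α : Type*} {ρ : α → α → ℝ} {x : α} {r s : ℝ} (h : r ≤ s) :
    ball ρ x r ⊆ ball ρ x s :=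
  fun _ hy => lt_of_lt_of_le hy h

namespace IsQuasiMetricMeasure

lemma pos (hX : IsQuasiMetricMeasure ρ μ K₀) : 0 < K₀ := one_pos.trans_le hX.one_le

lemma dist_self (hX : IsQuasiMetricMeasure ρ μ K₀) (x : X) : ρ x x = 0 :=
  (hX.eq_zero_iff x x).2 rfl

lemma mem_ball_comm (hX : IsQuasiMetricMeasure ρ μ K₀) {x y : X} {r : ℝ} :
    y ∈ ball ρ x r ↔ x ∈ ball ρ y r := by
  rw [mem_ball, mem_ball, hX.symm]

lemma ball_subset_ball (hX : IsQuasiMetricMeasure ρ μ K₀) {x y : X} {d r R : ℝ}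
    (hxy : ρ x y ≤ d) (hR : K₀ * (d + r) ≤ R) : ball ρ y r ⊆ ball ρ x R := fun z hz =>
  calc ρ x z ≤ K₀ * (ρ x y + ρ y z) := hX.triangle x y z
    _ < K₀ * (d + r) := mul_lt_mul_of_pos_left (add_lt_add_of_le_of_lt hxy hz) hX.pos
    _ ≤ R := hR

lemma dist_lt_of_mem_ball (hX : IsQuasiMetricMeasure ρ μ K₀) {x y z : X} {r s : ℝ}
    (hx : x ∈ ball ρ z r) (hy : y ∈ ball ρ z s) : ρ x y < K₀ * (r + s) :=
  hX.ball_subset_ball (hX.symm x z ▸ le_of_lt hx) le_rfl hy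

lemma measurable_dist (hX : IsQuasiMetricMeasure ρ μ K₀) (x : X) : Measurable (ρ x) :=
  measurable_of_Iio (hX.measurableSet_ball x)

end IsQuasiMetricMeasure

namespace IsDoubling

lemma measure_ball_ne_zero (hL : IsDoubling ρ μ L) (x : X) {r : ℝ} (hr : 0 < r) :
    μ (ball ρ x r) ≠ 0 :=
  (hL.2.2 x r hr).1.ne'

lemma measure_ball_ne_top (hL : IsDoubling ρ μ L) (x : X) {r : ℝ} (hr : 0 < r) :
    μ (ball ρ x r) ≠ ⊤ :=
  (hL.2.2 x r hr).2.2.ne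

lemma measure_ball_two_pow_mul_le (hL : IsDoubling ρ μ L) (n : ℕ) (x : X) {r : ℝ} (hr : 0 < r) :
    μ (ball ρ x (2 ^ n * r)) ≤ L ^ n * μ (ball ρ x r) := by
  induction n with
  | zero => simp
  | succ n ih =>
    calc μ (ball ρ x (2 ^ (n + 1) * r)) = μ (ball ρ x (2 * (2 ^ n * r))) := by ring_nf
      _ ≤ L * μ (ball ρ x (2 ^ n * r)) := (hL.2.2 x (2 ^ n * r) (by positivity)).2.1
      _ ≤ L * (L ^ n * μ (ball ρ x r)) := by gcongr
      _ = L ^ (n + 1) * μ (ball ρ x r) := by ring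

lemma exists_measure_ball_mul_le (hL : IsDoubling ρ μ L) (hX : IsQuasiMetricMeasure ρ μ K₀)
    (c : ℝ) : ∃ D : ℝ≥0, ∀ x y r, 0 < r → ρ x y ≤ c * r →
      μ (ball ρ x (c * r)) ≤ D * μ (ball ρ y r) := by
  lift L to ℝ≥0 using hL.2.1.ne
  obtain ⟨n, hn⟩ := pow_unbounded_of_one_lt (K₀ * (2 * c)) one_lt_two
  refine ⟨L ^ n, fun x y r hr hxy => ?_⟩
  have hsub : ball ρ x (c * r) ⊆ ball ρ y (2 ^ n * r) :=
    hX.ball_subset_ball (hX.symm y x ▸ hxy) (by nlinarith)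
  calc μ (ball ρ x (c * r)) ≤ μ (ball ρ y (2 ^ n * r)) := measure_mono hsub
    _ ≤ (L ^ n : ℝ≥0) * μ (ball ρ y r) := by
        exact_mod_cast hL.measure_ball_two_pow_mul_le n y hr

lemma sigmaFinite (hL : IsDoubling ρ μ L) : SigmaFinite μ := by
  rcases isEmpty_or_nonempty X with _ | ⟨⟨x⟩⟩
  · rw [Measure.eq_zero_of_isEmpty μ]
    infer_instance
  refine ⟨⟨⟨fun n : ℕ => ball ρ x (n + 1), fun _ => trivial, fun n =>
    (hL.measure_ball_ne_top x (by positivity)).lt_top, iUnion_eq_univ_iff.2 fun y => ?_⟩⟩⟩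
  obtain ⟨n, hn⟩ := exists_nat_gt (ρ x y)
  exact ⟨n, hn.trans (lt_add_one _)⟩

end IsDoubling

end Doubling

section AlmostDecreasing

/-- `r ↦ φ(x, r)` is almost decreasing, uniformly in `x`: the half of `φ ∈ 𝒢^dec_p` that does not
involve the measure. -/
def AlmostDecreasing {α : Type*} (φ : α → ℝ → ℝ) : Prop :=
  ∃ C : ℝ, 1 ≤ C ∧ ∀ (x : α) (r s : ℝ), 0 < r → r ≤ s → φ x s ≤ C * φ x r

lemma GdecP.almostDecreasing {p : ℝ} (hφG : GdecP ρ μ p φ) : AlmostDecreasing φ :=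
  let ⟨C, hC, hdec⟩ := hφG
  ⟨C, hC, fun x r s hr hrs => (hdec x r s hr hrs).2⟩

lemma AlmostDecreasing.exists_ofReal_le_mul {α : Type*} {ρ : α → α → ℝ} {φ : α → ℝ → ℝ}
    (hφD : AlmostDecreasing φ) (hφN : Nearness ρ φ) :
    ∃ B : ℝ≥0, ∀ x z r s, 0 < r → r ≤ s → ρ x z ≤ r →
      ENNReal.ofReal (φ x s) ≤ B * ENNReal.ofReal (φ z r) := by
  obtain ⟨C, hC, hdec⟩ := hφD
  obtain ⟨C', hC', hnear⟩ := hφN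
  have hC0 : 0 ≤ C := zero_le_one.trans hC
  refine ⟨(C * C').toNNReal, fun x z r s hr hrs hxz => ?_⟩
  rw [← ENNReal.ofReal, ← ENNReal.ofReal_mul (mul_nonneg hC0 (zero_le_one.trans hC')), mul_assoc]
  exact ENNReal.ofReal_le_ofReal ((hdec x r s hr hrs).trans (by gcongr; exact hnear x z r hr hxz))

lemma AlmostDecreasing.tendsto_atTop_zero {α : Type*} {φ : α → ℝ → ℝ}
    (hφD : AlmostDecreasing φ) (hφ : PhiPos φ) {x : α}
    (hint : IntegrableOn (fun t => φ x t / t) (Ioi 1)) : Tendsto (φ x) atTop (𝓝 0) := by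
  obtain ⟨C, hC, hdec⟩ := hφD
  have hC0 : 0 < C := one_pos.trans_le hC
  have hfrequently_small : ∀ ε > 0, ∃ r > 0, φ x r < ε := by
    intro ε hε
    by_contra! hlarge
    refine not_integrableOn_Ioi_inv (a := 1) ((hint.const_mul ε⁻¹).mono'
      measurable_inv.aestronglyMeasurable ?_)
    filter_upwards [ae_restrict_mem measurableSet_Ioi] with t ht
    have ht0 : 0 < t := one_pos.trans ht
    rw [Real.norm_of_nonneg (by positivity), ← mul_div_assoc, inv_eq_one_div t]
    gcongr
    exact (one_le_inv_mul₀ hε).2 (hlarge t ht0)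
  refine (tendsto_order.2 ⟨fun a ha => ?_, fun ε hε => ?_⟩)
  · filter_upwards [eventually_gt_atTop 0] with r hr using ha.trans (hφ x r hr)
  · obtain ⟨r, hr, hsmall⟩ := hfrequently_small (ε / C) (by positivity)
    filter_upwards [eventually_ge_atTop r] with s hs
    calc φ x s ≤ C * φ x r := hdec x r s hr hs
      _ < C * (ε / C) := by gcongr
      _ = ε := mul_div_cancel₀ ε hC0.ne'

end AlmostDecreasing

section Morrey

/-- The `L^p` mean `(⨍_{B(x,r)} g^p dμ)^{1/p}` over a ball: `morreyNorm` is the supremum of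
`lpMean / φ` over all balls. -/
def lpMean (ρ : X → X → ℝ) (μ : Measure X) (p : ℝ) (g : X → ℝ≥0∞) (x : X) (r : ℝ) : ℝ≥0∞ :=
  ((∫⁻ y in ball ρ x r, g y ^ p ∂μ) / μ (ball ρ x r)) ^ (1 / p)

variable {p : ℝ} {g h : X → ℝ≥0∞} {x : X} {r : ℝ}

lemma IsDoubling.lpMean_le_iff (hL : IsDoubling ρ μ L) (hp : 0 < p) (hr : 0 < r) {N : ℝ≥0∞} :
    lpMean ρ μ p g x r ≤ N ↔ ∫⁻ y in ball ρ x r, g y ^ p ∂μ ≤ N ^ p * μ (ball ρ x r) := by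
  rw [lpMean, one_div, ENNReal.rpow_inv_le_iff hp,
    ENNReal.div_le_iff (hL.measure_ball_ne_zero x hr) (hL.measure_ball_ne_top x hr)]

lemma IsQuasiMetricMeasure.lpMean_mono (hX : IsQuasiMetricMeasure ρ μ K₀) (hp : 0 ≤ p)
    (hgh : ∀ y ∈ ball ρ x r, g y ≤ h y) : lpMean ρ μ p g x r ≤ lpMean ρ μ p h x r := by
  unfold lpMean
  gcongr ?_ ^ (1 / p)
  gcongr ?_ / _
  exact setLIntegral_mono' (hX.measurableSet_ball x r) fun y hy => by gcongr; exact hgh y hy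

lemma lpMean_const_mul (hp : 0 < p) {c : ℝ≥0∞} (hc : c ≠ ⊤) :
    lpMean ρ μ p (fun y => c * g y) x r = c * lpMean ρ μ p g x r := by
  simp only [lpMean, ENNReal.mul_rpow_of_nonneg _ _ hp.le]
  rw [lintegral_const_mul' _ _ (ENNReal.rpow_ne_top_of_nonneg hp.le hc), mul_div_assoc,
    ENNReal.mul_rpow_of_nonneg _ _ (by positivity), one_div, ENNReal.rpow_rpow_inv hp.ne']

lemma IsDoubling.lpMean_const (hL : IsDoubling ρ μ L) (hp : 0 < p) (hr : 0 < r) (c : ℝ≥0∞) :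
    lpMean ρ μ p (fun _ => c) x r = c := by
  rw [lpMean, setLIntegral_const, ENNReal.mul_div_cancel_right (hL.measure_ball_ne_zero x hr)
    (hL.measure_ball_ne_top x hr), one_div, ENNReal.rpow_rpow_inv hp.ne']

lemma lpMean_add_le (hp : 0 < p) (hg : Measurable g) :
    lpMean ρ μ p (fun y => g y + h y) x r ≤
      2 * 2 ^ (1 / p) * (lpMean ρ μ p g x r + lpMean ρ μ p h x r) := by
  set m := μ (ball ρ x r)
  have hint : ∫⁻ y in ball ρ x r, (g y + h y) ^ p ∂μ ≤
      2 ^ p * (∫⁻ y in ball ρ x r, g y ^ p ∂μ + ∫⁻ y in ball ρ x r, h y ^ p ∂μ) := by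
    rw [← lintegral_add_left (hg.pow_const p), ← lintegral_const_mul' _ _ (by finiteness)]
    exact lintegral_mono fun y => add_rpow_le_two_rpow_mul _ _ hp.le
  calc lpMean ρ μ p (fun y => g y + h y) x r
      ≤ (2 ^ p * ((∫⁻ y in ball ρ x r, g y ^ p ∂μ) / m +
          (∫⁻ y in ball ρ x r, h y ^ p ∂μ) / m)) ^ (1 / p) := by
        rw [← ENNReal.add_div, ← mul_div_assoc]
        unfold lpMean
        gcongr
    _ = 2 * ((∫⁻ y in ball ρ x r, g y ^ p ∂μ) / m +
          (∫⁻ y in ball ρ x r, h y ^ p ∂μ) / m) ^ (1 / p) := by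
        rw [ENNReal.mul_rpow_of_nonneg _ _ (by positivity), one_div, ENNReal.rpow_rpow_inv hp.ne']
    _ ≤ 2 * (2 ^ (1 / p) * (lpMean ρ μ p g x r + lpMean ρ μ p h x r)) := by
        gcongr
        exact add_rpow_le_two_rpow_mul _ _ (by positivity)
    _ = 2 * 2 ^ (1 / p) * (lpMean ρ μ p g x r + lpMean ρ μ p h x r) := by ring

lemma IsDoubling.lpMean_le_lpMean_of_exponent_le (hL : IsDoubling ρ μ L) (hr : 0 < r) {q : ℝ}
    (hq : 0 < q) (hqp : q ≤ p) (hg : Measurable g) :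
    lpMean ρ μ q g x r ≤ lpMean ρ μ p g x r := by
  have hp : 0 < p := hq.trans_le hqp
  have hball := hL.measure_ball_ne_zero x hr
  have hball_top := hL.measure_ball_ne_top x hr
  have h := eLpNorm'_le_eLpNorm'_mul_rpow_measure_univ hq hqp hg.aestronglyMeasurable
    (μ := μ.restrict (ball ρ x r))
  simp only [eLpNorm', enorm_eq_self, Measure.restrict_apply_univ] at h
  rw [lpMean, lpMean, ENNReal.div_rpow_of_nonneg _ _ (by positivity),
    ENNReal.div_rpow_of_nonneg _ _ (by positivity), ENNReal.div_le_iff (by simp [hball, hball_top])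
    (by finiteness)]
  refine h.trans_eq ?_
  rw [ENNReal.rpow_sub _ _ hball hball_top, ← mul_div_assoc, ENNReal.mul_div_right_comm]

lemma morreyNorm_le_iff (hφ : PhiPos φ) {N : ℝ≥0∞} : morreyNorm ρ μ p φ g ≤ N ↔
    ∀ x r, 0 < r → lpMean ρ μ p g x r ≤ N * ENNReal.ofReal (φ x r) := by
  simp only [morreyNorm, iSup_le_iff]
  refine forall₃_congr fun x r hr => ?_
  exact ENNReal.div_le_iff (ENNReal.ofReal_pos.2 (hφ x r hr)).ne' ENNReal.ofReal_ne_top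

lemma lpMean_le_morreyNorm_mul (hφ : PhiPos φ) (hr : 0 < r) :
    lpMean ρ μ p g x r ≤ morreyNorm ρ μ p φ g * ENNReal.ofReal (φ x r) :=
  (morreyNorm_le_iff hφ).1 le_rfl x r hr

lemma morreyNorm_mono (hp : 0 ≤ p) (hgh : ∀ x, g x ≤ h x) :
    morreyNorm ρ μ p φ g ≤ morreyNorm ρ μ p φ h := by
  unfold morreyNorm
  gcongr
  exact hgh _

lemma morreyNorm_const_mul (hp : 0 < p) {c : ℝ≥0∞} (hc : c ≠ ⊤) :
    morreyNorm ρ μ p φ (fun y => c * g y) = c * morreyNorm ρ μ p φ g := by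
  change (⨆ x, ⨆ r, ⨆ _ : 0 < r, lpMean ρ μ p _ x r / _) =
    c * ⨆ x, ⨆ r, ⨆ _ : 0 < r, lpMean ρ μ p _ x r / _
  simp only [ENNReal.mul_iSup, lpMean_const_mul hp hc, mul_div_assoc]

lemma morreyNorm_add_le (hφ : PhiPos φ) (hp : 0 < p) (hg : Measurable g) :
    morreyNorm ρ μ p φ (fun y => g y + h y) ≤
      2 * 2 ^ (1 / p) * (morreyNorm ρ μ p φ g + morreyNorm ρ μ p φ h) := by
  refine (morreyNorm_le_iff hφ).2 fun x r hr => ?_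
  calc lpMean ρ μ p (fun y => g y + h y) x r
      ≤ 2 * 2 ^ (1 / p) * (lpMean ρ μ p g x r + lpMean ρ μ p h x r) := lpMean_add_le hp hg
    _ ≤ 2 * 2 ^ (1 / p) * (morreyNorm ρ μ p φ g * ENNReal.ofReal (φ x r) +
          morreyNorm ρ μ p φ h * ENNReal.ofReal (φ x r)) := by
        gcongr <;> exact lpMean_le_morreyNorm_mul hφ hr
    _ = _ := by ring

lemma IsDoubling.lpMean_le_of_le_const_mul_add (hL : IsDoubling ρ μ L)
    (hX : IsQuasiMetricMeasure ρ μ K₀) (hp : 0 < p) (hr : 0 < r) {C a : ℝ≥0∞} (hC : C ≠ ⊤)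
    (hgh : ∀ y ∈ ball ρ x r, g y ≤ C * (a + h y)) :
    lpMean ρ μ p g x r ≤ C * (2 * 2 ^ (1 / p) * (a + lpMean ρ μ p h x r)) :=
  calc lpMean ρ μ p g x r ≤ C * lpMean ρ μ p (fun y => a + h y) x r :=
        (hX.lpMean_mono hp.le hgh).trans_eq (lpMean_const_mul hp hC)
    _ ≤ C * (2 * 2 ^ (1 / p) * (a + lpMean ρ μ p h x r)) := by
        gcongr _ * ?_
        exact (lpMean_add_le hp measurable_const).trans_eq (by rw [hL.lpMean_const hp hr])

lemma IsDoubling.tendsto_lpMean_atTop_zero (hL : IsDoubling ρ μ L) {q : ℝ} (hq : 0 < q)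
    (hqp : q ≤ p) (hφ : PhiPos φ) (hφ0 : Tendsto (φ x) atTop (𝓝 0)) (hg : Measurable g)
    (hN : morreyNorm ρ μ p φ g ≠ ⊤) : Tendsto (lpMean ρ μ q g x) atTop (𝓝 0) := by
  have hbound : Tendsto (fun r => morreyNorm ρ μ p φ g * ENNReal.ofReal (φ x r)) atTop (𝓝 0) := by
    simpa using ENNReal.Tendsto.const_mul (ENNReal.tendsto_ofReal hφ0) (.inr hN)
  refine tendsto_of_tendsto_of_tendsto_of_le_of_le' tendsto_const_nhds hbound
    (.of_forall fun _ => zero_le) ?_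
  filter_upwards [eventually_gt_atTop 0] with r hr
  exact (hL.lpMean_le_lpMean_of_exponent_le hr hq hqp hg).trans (lpMean_le_morreyNorm_mul hφ hr)

lemma IsDoubling.lpMean_le_of_le_const_mul_ofReal_add (hL : IsDoubling ρ μ L)
    (hX : IsQuasiMetricMeasure ρ μ K₀) (hφ : PhiPos φ) (hp : 0 < p) (hr : 0 < r)
    {C b t : ℝ≥0∞} (hC : C ≠ ⊤) (ht : t ≠ ⊤) (hb : t * morreyNorm ρ μ p φ h ≤ b)
    (hgh : ∀ y ∈ ball ρ x r, g y ≤ C * (b * ENNReal.ofReal (φ x r) + t * h y)) :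
    lpMean ρ μ p g x r ≤ C * (2 * 2 ^ (1 / p) * 2) * b * ENNReal.ofReal (φ x r) :=
  calc lpMean ρ μ p g x r
      ≤ C * (2 * 2 ^ (1 / p) * (b * ENNReal.ofReal (φ x r) + t * lpMean ρ μ p h x r)) := by
        rw [← lpMean_const_mul hp ht]
        exact hL.lpMean_le_of_le_const_mul_add hX hp hr hC hgh
    _ ≤ C * (2 * 2 ^ (1 / p) * (b * ENNReal.ofReal (φ x r) +
          t * (morreyNorm ρ μ p φ h * ENNReal.ofReal (φ x r)))) := by
        gcongr
        exact lpMean_le_morreyNorm_mul hφ hr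
    _ ≤ C * (2 * 2 ^ (1 / p) * (b * ENNReal.ofReal (φ x r) + b * ENNReal.ofReal (φ x r))) := by
        rw [← mul_assoc t]
        gcongr
    _ = C * (2 * 2 ^ (1 / p) * 2) * b * ENNReal.ofReal (φ x r) := by ring

lemma morreyNorm_const_mul_add_add_le {k : X → ℝ≥0∞} (hφ : PhiPos φ) (hp : 0 < p)
    (hg : Measurable g) (hh : Measurable h) {c : ℝ≥0∞} (hc : c ≠ ⊤) :
    morreyNorm ρ μ p φ (fun y => c * g y + (h y + k y)) ≤
      2 * 2 ^ (1 / p) * (c * morreyNorm ρ μ p φ g +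
        2 * 2 ^ (1 / p) * (morreyNorm ρ μ p φ h + morreyNorm ρ μ p φ k)) := by
  refine (morreyNorm_add_le hφ hp (hg.const_mul c)).trans ?_
  rw [morreyNorm_const_mul hp hc]
  gcongr
  exact morreyNorm_add_le hφ hp hh

end Morrey

section ReverseDoubling

lemma IsDoubling.mul_measure_ball_le_of_lt_div (hL : IsDoubling ρ μ L) {x : X} {r : ℝ}
    (hr : 0 < r) {c : ℝ≥0∞} {A : Set X} (h : c < μ A / μ (ball ρ x r)) :
    c * μ (ball ρ x r) ≤ μ A :=
  (ENNReal.le_div_iff_mul_le (.inl (hL.measure_ball_ne_zero x hr))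
    (.inl (hL.measure_ball_ne_top x hr))).1 h.le

lemma WRD.exists_pow_mul_measure_ball_le (hWRD : WRD ρ μ) (hL : IsDoubling ρ μ L) :
    ∃ (x₀ : X) (Λ R₀ : ℝ) (C : ℝ≥0), 1 < Λ ∧ 0 < R₀ ∧ 1 < C ∧ ∀ (m : ℕ) (R : ℝ), R₀ ≤ R →
      (C ^ m : ℝ≥0) * μ (ball ρ x₀ R) ≤ μ (ball ρ x₀ (Λ ^ m * R)) := by
  obtain ⟨x₀, Λ, C₁, hΛ, hC₁, hliminf⟩ := hWRD
  obtain ⟨C, hC, hCC₁⟩ := ENNReal.lt_iff_exists_nnreal_btwn.1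
    (ENNReal.one_lt_ofReal.2 hC₁)
  obtain ⟨R₁, hR₁⟩ := eventually_atTop.1
    (eventually_lt_of_lt_liminf (hCC₁.trans_le hliminf))
  refine ⟨x₀, Λ, max R₁ 1, C, hΛ, lt_max_of_lt_right one_pos, by exact_mod_cast hC,
    fun m R hR => ?_⟩
  have hR0 : 0 < R := one_pos.trans_le ((le_max_right _ _).trans hR)
  induction m with
  | zero => simp
  | succ m ih =>
    have hle : R ≤ Λ ^ m * R := le_mul_of_one_le_left hR0.le (one_le_pow₀ hΛ.le)
    calc (C ^ (m + 1) : ℝ≥0) * μ (ball ρ x₀ R)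
        = C * ((C ^ m : ℝ≥0) * μ (ball ρ x₀ R)) := by push_cast; ring
      _ ≤ C * μ (ball ρ x₀ (Λ ^ m * R)) := by gcongr
      _ ≤ μ (ball ρ x₀ (Λ * (Λ ^ m * R))) :=
          hL.mul_measure_ball_le_of_lt_div (hR0.trans_le hle)
            (hR₁ _ ((le_max_left _ _).trans (hR.trans hle)))
      _ = μ (ball ρ x₀ (Λ ^ (m + 1) * R)) := by ring_nf

lemma WRD.exists_mul_measure_ball_le (hWRD : WRD ρ μ) (hX : IsQuasiMetricMeasure ρ μ K₀)
    (hL : IsDoubling ρ μ L) (M : ℝ≥0) (x : X) :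
    ∃ Λ R₀ : ℝ, 1 < Λ ∧ 0 < R₀ ∧ ∀ R, R₀ ≤ R →
      M * μ (ball ρ x R) ≤ μ (ball ρ x (Λ * R)) := by
  obtain ⟨x₀, Λ, R₀, C, hΛ, hR₀, hC, hgrowth⟩ := hWRD.exists_pow_mul_measure_ball_le hL
  obtain ⟨m, hm⟩ := pow_unbounded_of_one_lt M hC
  have hK := hX.one_le
  have : 0 < K₀ := hX.pos
  have hΛm : 1 ≤ Λ ^ m := one_le_pow₀ hΛ.le
  have hprod : 1 ≤ K₀ * (Λ ^ m * K₀) := one_le_mul_of_one_le_of_one_le hK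
    (one_le_mul_of_one_le_of_one_le hΛm hK)
  refine ⟨4 * (K₀ * (Λ ^ m * K₀)), max R₀ (ρ x₀ x), by linarith, lt_max_of_lt_left hR₀,
    fun R hR => ?_⟩
  obtain ⟨hR₀R, hdist⟩ := max_le_iff.1 hR
  have hR0 : 0 < R := hR₀.trans_le hR₀R
  have hinner : ball ρ x R ⊆ ball ρ x₀ (K₀ * (R + R)) := hX.ball_subset_ball hdist le_rfl
  have hle : R ≤ K₀ * (R + R) := by nlinarith
  have houter : ball ρ x₀ (Λ ^ m * (K₀ * (R + R))) ⊆ ball ρ x (4 * (K₀ * (Λ ^ m * K₀)) * R) := by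
    refine hX.ball_subset_ball (d := Λ ^ m * (K₀ * (R + R))) ?_ (by linarith)
    rw [hX.symm]
    exact (hdist.trans hle).trans (le_mul_of_one_le_left (by positivity) hΛm)
  calc (M : ℝ≥0∞) * μ (ball ρ x R)
      ≤ (C ^ m : ℝ≥0) * μ (ball ρ x₀ (K₀ * (R + R))) := by gcongr
    _ ≤ μ (ball ρ x₀ (Λ ^ m * (K₀ * (R + R)))) := hgrowth m _ (hR₀R.trans hle)
    _ ≤ μ (ball ρ x (4 * (K₀ * (Λ ^ m * K₀)) * R)) := measure_mono houter

lemma WMD.exists_measure_ball_le_measure_annulus_inter {Ω : Set X} (hWMD : WMD ρ μ Ω)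
    (hWRD : WRD ρ μ) (hX : IsQuasiMetricMeasure ρ μ K₀) (hL : IsDoubling ρ μ L) :
    ∃ (x : X) (Λ R₀ : ℝ) (M : ℝ≥0), 1 < Λ ∧ 0 < R₀ ∧ ∀ R, R₀ ≤ R →
      μ (ball ρ x (Λ * R)) ≤ M * μ (ρ x ⁻¹' Ico R (Λ * R) ∩ Ω) := by
  obtain ⟨x, C₀, hC₀, -, hliminf⟩ := hWMD
  obtain ⟨c, hc, hcC₀⟩ := ENNReal.lt_iff_exists_nnreal_btwn.1 (ENNReal.ofReal_pos.2 hC₀)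
  obtain ⟨R₁, hR₁⟩ := eventually_atTop.1 (eventually_lt_of_lt_liminf (hcC₀.trans_le hliminf))
  obtain ⟨Λ, R₂, hΛ, hR₂, hgrowth⟩ := hWRD.exists_mul_measure_ball_le hX hL (2 / c) x
  refine ⟨x, Λ, max R₁ R₂, 2 / c, hΛ, lt_max_of_lt_right hR₂, fun R hR => ?_⟩
  obtain ⟨hR₁R, hR₂R⟩ := max_le_iff.1 hR
  have hR0 : 0 < R := hR₂.trans_le hR₂R
  have hRΛ : R ≤ Λ * R := le_mul_of_one_le_left hR0.le hΛ.le
  set B := μ (ball ρ x (Λ * R))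
  set A := ρ x ⁻¹' Ico R (Λ * R) ∩ Ω
  have hdensity : c * B ≤ μ A + μ (ball ρ x R) := by
    refine (hL.mul_measure_ball_le_of_lt_div (hR0.trans_le hRΛ) (hR₁ _ (hR₁R.trans hRΛ))).trans
      ((measure_mono fun y hy => ?_).trans (measure_union_le _ _))
    exact (lt_or_ge (ρ x y) R).symm.imp (fun h => ⟨⟨h, hy.1⟩, hy.2⟩) id
  have hcancel : B + B ≤ (2 / c : ℝ≥0) * μ A + B :=
    calc B + B = (2 / c : ℝ≥0) * (c * B) := by
          rw [← mul_assoc, ← ENNReal.coe_mul, div_mul_cancel₀ _ (by simpa using hc.ne'),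
            ENNReal.coe_ofNat, two_mul]
      _ ≤ (2 / c : ℝ≥0) * (μ A + μ (ball ρ x R)) := by gcongr
      _ ≤ (2 / c : ℝ≥0) * μ A + B := by
          rw [mul_add]
          gcongr
          exact hgrowth R hR₂R
  exact (ENNReal.add_le_add_iff_right (hL.measure_ball_ne_top x (hR0.trans_le hRΛ))).1 hcancel

end ReverseDoubling

section Integrand

/-- The integrand of `sob ρ μ E f q s x`, as a function of both variables. -/
def sobIntegrand (ρ : X → X → ℝ) (μ : Measure X) (f : X → ℝ) (q s : ℝ) (x y : X) : ℝ≥0∞ :=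
  ENNReal.ofReal |f x - f y| ^ q / (U ρ μ x y * ENNReal.ofReal (ρ x y) ^ (s * q))

variable {Ω : Set X} {f : X → ℝ} {p q s : ℝ}

lemma sob_rpow (hq : 0 < q) (x : X) :
    sob ρ μ Ω f q s x ^ q = ∫⁻ y in Ω, sobIntegrand ρ μ f q s x y ∂μ := by
  rw [sob, one_div, ENNReal.rpow_inv_rpow hq.ne']
  rfl

lemma sob_add_const (a : ℝ) : sob ρ μ Ω (fun x => f x + a) q s = sob ρ μ Ω f q s := by
  simp only [funext_iff, sob, add_sub_add_right_eq_sub, implies_true]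

lemma ofReal_abs_sub_rpow_le_mul_sobIntegrand (hsq : 0 ≤ s * q) {M : ℝ≥0∞} {τ : ℝ}
    (hM : M ≠ 0) (hM_top : M ≠ ⊤) (hτ : 0 < τ) {x y : X} (hU : U ρ μ x y ≤ M) (hρ : ρ x y ≤ τ) :
    ENNReal.ofReal |f x - f y| ^ q ≤
      M * ENNReal.ofReal τ ^ (s * q) * sobIntegrand ρ μ f q s x y := by
  have hτ0 : ENNReal.ofReal τ ^ (s * q) ≠ 0 :=
    (ENNReal.rpow_pos (ENNReal.ofReal_pos.2 hτ) ENNReal.ofReal_ne_top).ne'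
  unfold sobIntegrand
  calc ENNReal.ofReal |f x - f y| ^ q
      = M * ENNReal.ofReal τ ^ (s * q) *
          (ENNReal.ofReal |f x - f y| ^ q / (M * ENNReal.ofReal τ ^ (s * q))) :=
        (ENNReal.mul_div_cancel (mul_ne_zero hM hτ0) (by finiteness)).symm
    _ ≤ _ := by gcongr

end Integrand

section LowerBound

variable {Ω : Set X} {f : X → ℝ} {p q s : ℝ} {x₁ : X} {e : ℝ≥0∞}

lemma ofReal_abs_rpow_mul_measure_le (hf : Measurable f) (hq : 0 ≤ q) (A : Set X) (x : X) :
    ENNReal.ofReal |f x| ^ q * μ A ≤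
      2 ^ q * (∫⁻ y in A, ENNReal.ofReal |f x - f y| ^ q ∂μ +
        ∫⁻ y in A, ENNReal.ofReal |f y| ^ q ∂μ) := by
  rw [← lintegral_add_right _ (by fun_prop), ← lintegral_const_mul' _ _ (by finiteness),
    ← setLIntegral_const]
  refine lintegral_mono fun y => ?_
  calc ENNReal.ofReal |f x| ^ q
      ≤ (ENNReal.ofReal |f x - f y| + ENNReal.ofReal |f y|) ^ q := by
        rw [← ENNReal.ofReal_add (abs_nonneg _) (abs_nonneg _)]
        gcongr
        simpa using abs_add_le (f x - f y) (f y)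
    _ ≤ _ := add_rpow_le_two_rpow_mul _ _ hq

lemma IsDoubling.setLIntegral_abs_rpow_le (hL : IsDoubling ρ μ L) (hq : 0 < q) {A : Set X}
    {T : ℝ} (hT : 0 < T) (hAm : MeasurableSet A) (hA : A ⊆ ball ρ x₁ T ∩ Ω)
    (hmean : lpMean ρ μ q (Ω.indicator fun x => ENNReal.ofReal |f x|) x₁ T ≤ e) :
    ∫⁻ y in A, ENNReal.ofReal |f y| ^ q ∂μ ≤ e ^ q * μ (ball ρ x₁ T) := by
  refine le_trans ?_ ((hL.lpMean_le_iff hq hT).1 hmean)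
  calc ∫⁻ y in A, ENNReal.ofReal |f y| ^ q ∂μ
      = ∫⁻ y in A, Ω.indicator (fun x => ENNReal.ofReal |f x|) y ^ q ∂μ :=
        setLIntegral_congr_fun hAm fun y hy => by rw [indicator_of_mem (hA hy).2]
    _ ≤ _ := lintegral_mono_set fun y hy => (hA hy).1

lemma IsDoubling.ofReal_abs_rpow_mul_le_of_annulus (hL : IsDoubling ρ μ L)
    (hX : IsQuasiMetricMeasure ρ μ K₀) (hf : Measurable f) (hq : 0 < q) (hs : 0 ≤ s)
    {D M : ℝ≥0} {T : ℝ} (hT : 0 < T) {x : X} (hx : x ∈ ball ρ x₁ T) {A : Set X}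
    (hAm : MeasurableSet A) (hA : A ⊆ ball ρ x₁ T ∩ Ω) (hMA : μ (ball ρ x₁ T) ≤ M * μ A)
    (hD : μ (ball ρ x (2 * K₀ * T)) ≤ D * μ (ball ρ x₁ T))
    (hmean : lpMean ρ μ q (Ω.indicator fun x => ENNReal.ofReal |f x|) x₁ T ≤ e) :
    ENNReal.ofReal |f x| ^ q * ENNReal.ofReal (2 * K₀ * T) ^ (-(s * q)) ≤ M * 2 ^ q *
      (D * ∫⁻ y in A, sobIntegrand ρ μ f q s x y ∂μ +
        e ^ q * ENNReal.ofReal (2 * K₀ * T) ^ (-(s * q))) := by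
  have hKT : 0 < 2 * K₀ * T := by have := hX.pos; positivity
  set m := μ (ball ρ x₁ T)
  set τ := ENNReal.ofReal (2 * K₀ * T)
  have hm : m ≠ 0 := hL.measure_ball_ne_zero x₁ hT
  have hm_top : m ≠ ⊤ := hL.measure_ball_ne_top x₁ hT
  have hDm : D * m ≠ 0 := fun h => hL.measure_ball_ne_zero x hKT (le_zero_iff.1 (h ▸ hD))
  have hτ : τ ^ (s * q) * τ ^ (-(s * q)) = 1 := by
    rw [← ENNReal.rpow_add _ _ (ENNReal.ofReal_pos.2 hKT).ne' ENNReal.ofReal_ne_top,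
      add_neg_cancel, ENNReal.rpow_zero]
  have hdiff : ∫⁻ y in A, ENNReal.ofReal |f x - f y| ^ q ∂μ ≤
      D * m * τ ^ (s * q) * ∫⁻ y in A, sobIntegrand ρ μ f q s x y ∂μ := by
    rw [← lintegral_const_mul' _ _ (by finiteness)]
    refine setLIntegral_mono' hAm fun y hy => ?_
    have hxy : ρ x y ≤ 2 * K₀ * T :=
      (hX.dist_lt_of_mem_ball hx (hA hy).1).le.trans_eq (by ring)
    exact ofReal_abs_sub_rpow_le_mul_sobIntegrand (by positivity) hDm (by finiteness) hKT
      ((min_le_left _ _).trans ((measure_mono (ball_mono hxy)).trans hD)) hxy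
  refine (ENNReal.mul_le_mul_iff_left hm hm_top).1 ?_
  calc ENNReal.ofReal |f x| ^ q * τ ^ (-(s * q)) * m
      ≤ M * (ENNReal.ofReal |f x| ^ q * μ A) * τ ^ (-(s * q)) := by
        rw [mul_right_comm, mul_left_comm]
        gcongr
    _ ≤ M * (2 ^ q * (D * m * τ ^ (s * q) * ∫⁻ y in A, sobIntegrand ρ μ f q s x y ∂μ +
          e ^ q * m)) * τ ^ (-(s * q)) := by
        gcongr ?_ * _
        gcongr _ * ?_
        refine (ofReal_abs_rpow_mul_measure_le hf hq.le A x).trans ?_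
        gcongr
        exact hL.setLIntegral_abs_rpow_le hq hT hAm hA hmean
    _ = M * 2 ^ q * (D * (τ ^ (s * q) * τ ^ (-(s * q))) *
          ∫⁻ y in A, sobIntegrand ρ μ f q s x y ∂μ + e ^ q * τ ^ (-(s * q))) * m := by ring
    _ = _ := by rw [hτ, mul_one]

lemma IsQuasiMetricMeasure.tsum_setLIntegral_annulus_le (hX : IsQuasiMetricMeasure ρ μ K₀)
    (hΩ : MeasurableSet Ω) {Λ R : ℝ} (hΛ : 1 ≤ Λ) (hR : 0 ≤ R) (x : X) (F : X → ℝ≥0∞) :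
    ∑' k : ℕ, ∫⁻ y in ρ x ⁻¹' Ico (R * Λ ^ k) (Λ * (R * Λ ^ k)) ∩ Ω, F y ∂μ ≤
      ∫⁻ y in Ω, F y ∂μ := by
  have hR_succ (k : ℕ) : R * Λ ^ (k + 1) = Λ * (R * Λ ^ k) := by ring
  have hR_mono : Monotone fun k : ℕ => R * Λ ^ k := monotone_nat_of_le_succ fun k => by
    rw [hR_succ]
    exact le_mul_of_one_le_left (by positivity) hΛ
  rw [← lintegral_iUnion]
  · exact lintegral_mono_set (iUnion_subset fun k => inter_subset_right)
  · exact fun k => (hX.measurable_dist x measurableSet_Ico).inter hΩ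
  · intro j k hjk
    have hIco := hR_mono.pairwise_disjoint_on_Ico_succ hjk
    simp only [Function.onFun, Order.succ_eq_add_one, hR_succ] at hIco
    exact (hIco.preimage (ρ x)).mono inter_subset_left inter_subset_left

lemma IsDoubling.ofReal_abs_rpow_mul_tsum_le (hL : IsDoubling ρ μ L)
    (hX : IsQuasiMetricMeasure ρ μ K₀) (hΩ : MeasurableSet Ω) (hf : Measurable f) (hq : 0 < q)
    (hs : 0 ≤ s) {D M : ℝ≥0} {Λ R : ℝ} (hΛ : 1 < Λ) (hR : 0 < R)
    (hannulus : ∀ T, R ≤ T → μ (ball ρ x₁ (Λ * T)) ≤ M * μ (ρ x₁ ⁻¹' Ico T (Λ * T) ∩ Ω))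
    (hD : ∀ x y r, 0 < r → ρ x y ≤ 2 * K₀ * r → μ (ball ρ x (2 * K₀ * r)) ≤ D * μ (ball ρ y r))
    (hmean : ∀ T, R ≤ T → lpMean ρ μ q (Ω.indicator fun x => ENNReal.ofReal |f x|) x₁ T ≤ e)
    {x : X} (hx : x ∈ ball ρ x₁ R) :
    ENNReal.ofReal |f x| ^ q * ∑' k : ℕ, ENNReal.ofReal (2 * K₀ * Λ * R * Λ ^ k) ^ (-(s * q)) ≤
      M * 2 ^ q * (D * sob ρ μ Ω f q s x ^ q +
        e ^ q * ∑' k : ℕ, ENNReal.ofReal (2 * K₀ * Λ * R * Λ ^ k) ^ (-(s * q))) := by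
  have hK := hX.one_le
  set A : ℕ → Set X := fun k => ρ x₁ ⁻¹' Ico (R * Λ ^ k) (Λ * (R * Λ ^ k)) ∩ Ω
  set w : ℕ → ℝ≥0∞ := fun k => ENNReal.ofReal (2 * K₀ * Λ * R * Λ ^ k) ^ (-(s * q))
  have hannulus_term (k : ℕ) : ENNReal.ofReal |f x| ^ q * w k ≤
      M * 2 ^ q * (D * ∫⁻ y in A k, sobIntegrand ρ μ f q s x y ∂μ + e ^ q * w k) := by
    have hle : R ≤ R * Λ ^ k := le_mul_of_one_le_right hR.le (one_le_pow₀ hΛ.le)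
    have hle' : R ≤ Λ * (R * Λ ^ k) := hle.trans (le_mul_of_one_le_left (hR.le.trans hle) hΛ.le)
    have hT : 0 < Λ * (R * Λ ^ k) := hR.trans_le hle'
    have hxT : ρ x₁ x < Λ * (R * Λ ^ k) := hx.trans_le hle'
    have hxT' : ρ x x₁ ≤ 2 * K₀ * (Λ * (R * Λ ^ k)) := by
      rw [hX.symm]
      exact hxT.le.trans (le_mul_of_one_le_left hT.le (by linarith))
    have h := hL.ofReal_abs_rpow_mul_le_of_annulus hX hf hq hs hT hxT
      ((hX.measurable_dist x₁ measurableSet_Ico).inter hΩ) (fun y hy => ⟨hy.1.2, hy.2⟩)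
      (hannulus _ hle) (hD x x₁ _ hT hxT') (hmean _ hle')
    rwa [show 2 * K₀ * (Λ * (R * Λ ^ k)) = 2 * K₀ * Λ * R * Λ ^ k by ring] at h
  calc ENNReal.ofReal |f x| ^ q * ∑' k, w k = ∑' k, ENNReal.ofReal |f x| ^ q * w k :=
        ENNReal.tsum_mul_left.symm
    _ ≤ M * 2 ^ q * (D * ∑' k, ∫⁻ y in A k, sobIntegrand ρ μ f q s x y ∂μ + e ^ q * ∑' k, w k) := by
        rw [← ENNReal.tsum_mul_left, ← ENNReal.tsum_mul_left, ← ENNReal.tsum_add,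
          ← ENNReal.tsum_mul_left]
        exact ENNReal.tsum_le_tsum hannulus_term
    _ ≤ _ := by
        gcongr
        rw [sob_rpow hq]
        exact hX.tsum_setLIntegral_annulus_le hΩ hΛ.le hR.le x₁ _

lemma le_of_rpow_le_mul_add_rpow (hq : 0 < q) {a b t B : ℝ≥0∞}
    (h : a ^ q ≤ B * (t * b ^ q + e ^ q)) :
    a ≤ (B * 2) ^ (1 / q) * (t ^ (1 / q) * b + e) := by
  have hq' : 0 ≤ 1 / q := by positivity
  have hroot (c : ℝ≥0∞) : (c ^ q) ^ (1 / q) = c := by rw [one_div, ENNReal.rpow_rpow_inv hq.ne']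
  calc a = (a ^ q) ^ (1 / q) := (hroot a).symm
    _ ≤ (B * (t * b ^ q + e ^ q)) ^ (1 / q) := by gcongr
    _ ≤ B ^ (1 / q) * (2 ^ (1 / q) * ((t * b ^ q) ^ (1 / q) + (e ^ q) ^ (1 / q))) := by
        rw [ENNReal.mul_rpow_of_nonneg _ _ hq']
        gcongr
        exact add_rpow_le_two_rpow_mul _ _ hq'
    _ = (B * 2) ^ (1 / q) * (t ^ (1 / q) * b + e) := by
        rw [ENNReal.mul_rpow_of_nonneg B _ hq', ENNReal.mul_rpow_of_nonneg t _ hq', hroot, hroot,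
          mul_assoc]

lemma le_of_mul_le_mul_add_mul {a b c d t W κ : ℝ≥0∞} (h : a * W ≤ c * (d * b + e * W))
    (hκ : 1 ≤ κ * (t * W)) (htop : t * W ≠ ⊤) : a ≤ c * (d * κ + 1) * (t * b + e) := by
  have hne : t * W ≠ 0 := fun h0 => by simp [h0] at hκ
  refine (ENNReal.mul_le_mul_iff_left hne htop).1 ?_
  calc a * (t * W) = t * (a * W) := by ring
    _ ≤ t * (c * (d * b + e * W)) := by gcongr
    _ = c * (d * 1 * (t * b) + e * (t * W)) := by ring
    _ ≤ c * (d * (κ * (t * W)) * (t * b + e) + (t * b + e) * (t * W)) := by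
        gcongr
        · exact le_self_add
        · exact le_add_self
    _ = c * (d * κ + 1) * (t * b + e) * (t * W) := by ring

lemma WMD.exists_eventually_ofReal_abs_le (hWMD : WMD ρ μ Ω) (hWRD : WRD ρ μ)
    (hX : IsQuasiMetricMeasure ρ μ K₀) (hL : IsDoubling ρ μ L) (hΩ : MeasurableSet Ω)
    (hq : 0 < q) : ∃ (x₁ : X) (C : ℝ≥0∞), C ≠ ⊤ ∧ ∀ f : X → ℝ, Measurable f →
      Tendsto (lpMean ρ μ q (Ω.indicator fun x => ENNReal.ofReal |f x|) x₁) atTop (𝓝 0) →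
      ∀ (z : X) (r : ℝ) (ε : ℝ≥0∞), 0 < ε → ∀ᶠ s in 𝓝[>] (0 : ℝ), ∀ x ∈ ball ρ z r,
        ENNReal.ofReal |f x| ≤ C * (ENNReal.ofReal s ^ (1 / q) * sob ρ μ Ω f q s x + ε) := by
  obtain ⟨x₁, Λ, R₀, M, hΛ, hR₀, hannulus⟩ :=
    hWMD.exists_measure_ball_le_measure_annulus_inter hWRD hX hL
  obtain ⟨D, hD⟩ := hL.exists_measure_ball_mul_le hX (2 * K₀)
  set θ := (q * Real.log Λ)⁻¹
  have hθ : 0 < θ := inv_pos.2 (mul_pos hq (Real.log_pos hΛ))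
  set κ := (ENNReal.ofReal (θ / 2))⁻¹
  have hκ_ne : ENNReal.ofReal (θ / 2) ≠ 0 := (ENNReal.ofReal_pos.2 (half_pos hθ)).ne'
  have hκ : κ ≠ ⊤ := ENNReal.inv_ne_top.2 hκ_ne
  refine ⟨x₁, (M * 2 ^ q * (D * κ + 1) * 2) ^ (1 / q), by finiteness, fun f hf hmean z r ε hε => ?_⟩
  obtain ⟨R, hR⟩ := eventually_atTop.1 ((hmean.eventually (ge_mem_nhds hε)).and
    ((eventually_ge_atTop R₀).and (eventually_ge_atTop (K₀ * (ρ x₁ z + r)))))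
  obtain ⟨-, hR₀R, hzR⟩ := hR R le_rfl
  have hR0 : 0 < R := hR₀.trans_le hR₀R
  have hA : 0 < 2 * K₀ * Λ * R := by have := hX.pos; have := one_pos.trans hΛ; positivity
  have hlim := tendsto_mul_tsum_mul_pow_rpow_neg hA hΛ hq
  filter_upwards [self_mem_nhdsWithin, hlim.eventually (gt_mem_nhds ENNReal.ofReal_lt_top),
    hlim.eventually (le_mem_nhds ((ENNReal.ofReal_lt_ofReal_iff hθ).2 (half_lt_self hθ)))]
    with s hs htop hge x hx
  refine le_of_rpow_le_mul_add_rpow hq (le_of_mul_le_mul_add_mul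
    (hL.ofReal_abs_rpow_mul_tsum_le hX hΩ hf hq (le_of_lt hs) hΛ hR0
      (fun T hT => hannulus T (hR₀R.trans hT)) hD (fun T hT => (hR T hT).1)
      (hX.ball_subset_ball le_rfl hzR hx)) ?_ htop.ne)
  rw [← ENNReal.inv_mul_cancel hκ_ne ENNReal.ofReal_ne_top]
  gcongr

lemma WMD.exists_mul_morreyNorm_le_liminf (hWMD : WMD ρ μ Ω) (hWRD : WRD ρ μ)
    (hX : IsQuasiMetricMeasure ρ μ K₀) (hL : IsDoubling ρ μ L) (hΩ : MeasurableSet Ω)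
    (hq : 0 < q) (hqp : q ≤ p) (hφ : PhiPos φ) (hφ0 : ∀ x, Tendsto (φ x) atTop (𝓝 0)) :
    ∃ c : ℝ≥0, 0 < c ∧ ∀ f : X → ℝ, Measurable f →
      morreyNorm ρ μ p φ (Ω.indicator fun x => ENNReal.ofReal |f x|) ≠ ⊤ →
      c * morreyNorm ρ μ p φ (Ω.indicator fun x => ENNReal.ofReal |f x|) ≤
        liminf (fun s => ENNReal.ofReal s ^ (1 / q) *
          morreyNorm ρ μ p φ (Ω.indicator (sob ρ μ Ω f q s))) (𝓝[>] 0) := by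
  have hp : 0 < p := hq.trans_le hqp
  obtain ⟨x₁, C, hC, hpointwise⟩ := hWMD.exists_eventually_ofReal_abs_le hWRD hX hL hΩ hq
  obtain ⟨c, hc, hcC⟩ := ENNReal.exists_nnreal_pos_mul_lt
    (show C * (2 * 2 ^ (1 / p) * 2) ≠ ⊤ by finiteness) one_ne_zero
  refine ⟨c, hc, fun f hf hN => le_of_forall_gt_imp_ge_of_dense fun b hb => ?_⟩
  set g := Ω.indicator fun x => ENNReal.ofReal |f x|
  have hg : Measurable g := hf.abs.ennreal_ofReal.indicator hΩ
  have hmean : Tendsto (lpMean ρ μ q g x₁) atTop (𝓝 0) :=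
    hL.tendsto_lpMean_atTop_zero hq hqp hφ (hφ0 x₁) hg hN
  have hgb : morreyNorm ρ μ p φ g ≤ C * (2 * 2 ^ (1 / p) * 2) * b := by
    refine (morreyNorm_le_iff hφ).2 fun z r hr => ?_
    have hε : 0 < b * ENNReal.ofReal (φ z r) :=
      ENNReal.mul_pos (pos_of_gt hb).ne' (ENNReal.ofReal_pos.2 (hφ z r hr)).ne'
    obtain ⟨s, hsb, hs⟩ := ((frequently_lt_of_liminf_lt (by isBoundedDefault) hb).and_eventually
      (hpointwise f hf hmean z r _ hε)).exists
    refine hL.lpMean_le_of_le_const_mul_ofReal_add hX hφ hp hr hC (by finiteness) hsb.le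
      fun y hy => ?_
    by_cases hyΩ : y ∈ Ω
    · simpa only [g, indicator_of_mem hyΩ, add_comm] using hs y hy
    · simp only [g, indicator_of_notMem hyΩ, zero_le]
  calc (c : ℝ≥0∞) * morreyNorm ρ μ p φ g ≤ c * (C * (2 * 2 ^ (1 / p) * 2) * b) := by gcongr
    _ = c * (C * (2 * 2 ^ (1 / p) * 2)) * b := by ring
    _ ≤ 1 * b := by gcongr
    _ = b := one_mul b

end LowerBound

section UpperBound

lemma IsDoubling.exists_countable_forall_dist_lt (hL : IsDoubling ρ μ L)
    (hX : IsQuasiMetricMeasure ρ μ K₀) {R : ℝ} (hR : 0 < R) :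
    ∃ A : Set X, A.Countable ∧ ∀ x, ∃ d ∈ A, ρ d x < R := by
  have := hL.sigmaFinite
  have hr : 0 < R / (2 * K₀) := by have := hX.pos; positivity
  obtain ⟨A, hA⟩ := zorn_subset {A : Set X | A.Pairwise fun x y => R ≤ ρ x y}
    fun c hc hchain => ⟨⋃₀ c, (pairwise_sUnion hchain.directedOn).2 hc,
      fun s hs => subset_sUnion_of_mem hs⟩
  have hdisjoint : Pairwise (Function.onFun Disjoint fun d : A => ball ρ d.1 (R / (2 * K₀))) := by
    refine fun d d' hdd' => disjoint_left.2 fun y hd hd' => ?_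
    refine (hA.prop d.2 d'.2 (Subtype.coe_injective.ne hdd')).not_gt ?_
    have h := hX.dist_lt_of_mem_ball (z := y) (hX.mem_ball_comm.1 hd) (hX.mem_ball_comm.1 hd')
    have := hX.pos
    rwa [← two_mul, ← mul_assoc, mul_comm K₀, mul_div_cancel₀ R (by positivity)] at h
  have hcountable := Measure.countable_meas_pos_of_disjoint_iUnion (μ := μ)
    (fun d : A => hX.measurableSet_ball d.1 (R / (2 * K₀))) hdisjoint
  simp only [(hL.2.2 _ _ hr).1, ofPred_true, countable_univ_iff, countable_coe_iff] at hcountable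
  refine ⟨A, hcountable, fun x => ?_⟩
  by_contra! hfar
  have hx : x ∈ A := hA.le_of_ge (hA.prop.insert fun d hd _ => ⟨hX.symm d x ▸ hfar d hd, hfar d hd⟩)
    (subset_insert x A) (mem_insert x A)
  exact (hfar x hx).not_gt (hX.dist_self x ▸ hR)

/-- A measurable symmetric kernel at scale `R`: up to the constant `D`, integration against `P x`
is dominated by the average over the ball `B(x, R)`. -/
structure IsAveragingKernel (ρ : X → X → ℝ) (μ : Measure X) (D : ℝ≥0) (R : ℝ)
    (P : X → X → ℝ≥0∞) : Prop where
  measurable : Measurable (Function.uncurry P)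
  symm : ∀ x y, P x y = P y x
  le_indicator : ∀ x y, P x y ≤ (ball ρ x R).indicator (fun _ => D / μ (ball ρ x R)) y

lemma inv_le_div_of_le_mul {a b c : ℝ≥0∞} (ha : a ≠ 0) (ha_top : a ≠ ⊤) (h : a ≤ c * b) :
    b⁻¹ ≤ c / a := by
  rw [ENNReal.le_div_iff_mul_le (.inl ha) (.inl ha_top)]
  calc b⁻¹ * a ≤ b⁻¹ * (c * b) := by gcongr
    _ = c * (b⁻¹ * b) := by ring
    _ ≤ c := mul_le_of_le_one_right' (ENNReal.inv_mul_le_one b)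

lemma IsDoubling.isAveragingKernel_iSup_indicator (hL : IsDoubling ρ μ L)
    (hX : IsQuasiMetricMeasure ρ μ K₀) {ι : Type*} [Countable ι] (d : ι → X) {R : ℝ} (hR : 0 < R)
    {D : ℝ≥0}
    (hD : ∀ x y, ρ x y ≤ 2 * K₀ * R → μ (ball ρ x (2 * K₀ * R)) ≤ D * μ (ball ρ y R)) (C : ℝ≥0) :
    IsAveragingKernel ρ μ (C * D) (2 * K₀ * R) fun x y =>
      ⨆ i, (ball ρ (d i) R ×ˢ ball ρ (d i) R).indicator
        (fun _ => C / μ (ball ρ (d i) R)) (x, y) where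
  measurable := .iSup fun i => measurable_const.indicator
    ((hX.measurableSet_ball (d i) R).prod (hX.measurableSet_ball (d i) R))
  symm x y := iSup_congr fun _ => indicator_eq_indicator and_comm rfl
  le_indicator x y := iSup_le fun i => indicator_apply_le' (fun hxy => by
    have hK := hX.one_le
    obtain ⟨hx, hy⟩ : x ∈ ball ρ (d i) R ∧ y ∈ ball ρ (d i) R := hxy
    have hxy : y ∈ ball ρ x (2 * K₀ * R) := (hX.dist_lt_of_mem_ball hx hy).trans_eq (by ring)
    have hxd : ρ x (d i) ≤ 2 * K₀ * R := by
      rw [hX.symm]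
      exact (mem_ball.1 hx).le.trans (le_mul_of_one_le_left hR.le (by linarith))
    rw [indicator_of_mem hxy, ENNReal.coe_mul, mul_div_assoc, div_eq_mul_inv]
    gcongr
    exact inv_le_div_of_le_mul (hL.measure_ball_ne_zero x (by positivity))
      (hL.measure_ball_ne_top x (by positivity)) (hD x (d i) hxd)) fun _ => zero_le

lemma IsDoubling.inv_U_le_div_measure_ball (hL : IsDoubling ρ μ L) {T R : ℝ} (hT : 0 < T)
    {D : ℝ≥0} {d x y : X} (hx : x ∈ ball ρ d T) (hy : y ∈ ball ρ d T) (hxy : R ≤ ρ x y)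
    (hD : ∀ z, ρ d z ≤ T → μ (ball ρ d T) ≤ D * μ (ball ρ z R)) :
    (U ρ μ x y)⁻¹ ≤ D / μ (ball ρ d T) := by
  refine inv_le_div_of_le_mul (hL.measure_ball_ne_zero d hT) (hL.measure_ball_ne_top d hT) ?_
  have hball {z : X} (hz : z ∈ ball ρ d T) : μ (ball ρ d T) ≤ D * μ (ball ρ z (ρ x y)) :=
    (hD z (le_of_lt hz)).trans (by gcongr; exact ball_mono hxy)
  rcases min_choice (μ (ball ρ x (ρ x y))) (μ (ball ρ y (ρ x y))) with hU | hU <;> rw [U, hU]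
  exacts [hball hx, hball hy]

lemma IsDoubling.exists_isAveragingKernel (hL : IsDoubling ρ μ L)
    (hX : IsQuasiMetricMeasure ρ μ K₀) :
    ∃ (D : ℝ≥0) (c : ℝ), 0 < c ∧ ∀ R, 0 < R → ∃ P, IsAveragingKernel ρ μ D (c * R) P ∧
      ∀ x y, R ≤ ρ x y → ρ x y < 2 * R → (U ρ μ x y)⁻¹ ≤ P x y := by
  have hK := hX.one_le
  obtain ⟨C, hC⟩ := hL.exists_measure_ball_mul_le hX (3 * K₀)
  obtain ⟨D, hD⟩ := hL.exists_measure_ball_mul_le hX (2 * K₀)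
  refine ⟨C * D, 2 * K₀ * (3 * K₀), by positivity, fun R hR => ?_⟩
  have hKR : 0 < 3 * K₀ * R := by positivity
  obtain ⟨A, hA, hcover⟩ := hL.exists_countable_forall_dist_lt hX hR
  have := hA.to_subtype
  have hP := hL.isAveragingKernel_iSup_indicator hX ((↑) : A → X) hKR
    (fun x y => hD x y _ hKR) C
  rw [← mul_assoc] at hP
  refine ⟨_, hP, fun x y hRxy hxyR => ?_⟩
  obtain ⟨d, hd, hdx⟩ := hcover x
  have hx : x ∈ ball ρ d (3 * K₀ * R) := hdx.trans_le (le_mul_of_one_le_left hR.le (by linarith))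
  have hy : y ∈ ball ρ d (3 * K₀ * R) := hX.ball_subset_ball hdx.le (by linarith) hxyR
  refine le_iSup_of_le ⟨d, hd⟩ ?_
  rw [indicator_of_mem (mk_mem_prod hx hy)]
  exact hL.inv_U_le_div_measure_ball hKR hx hy hRxy fun z => hC d z R hR

namespace IsAveragingKernel

variable {D : ℝ≥0} {R : ℝ} {P : X → X → ℝ≥0∞} {p q : ℝ} {g : X → ℝ≥0∞} {x : X}

lemma lintegral_mul_le (hP : IsAveragingKernel ρ μ D R P) (hX : IsQuasiMetricMeasure ρ μ K₀)
    (hL : IsDoubling ρ μ L) (hR : 0 < R) (x : X) (h : X → ℝ≥0∞) :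
    ∫⁻ y, P x y * h y ∂μ ≤ D * ((∫⁻ y in ball ρ x R, h y ∂μ) / μ (ball ρ x R)) := by
  have hball := hL.measure_ball_ne_zero x hR
  calc ∫⁻ y, P x y * h y ∂μ
      ≤ ∫⁻ y, (ball ρ x R).indicator (fun y => D / μ (ball ρ x R) * h y) y ∂μ := by
        refine lintegral_mono fun y => ?_
        rw [indicator_mul_left]
        gcongr
        exact hP.le_indicator x y
    _ = D / μ (ball ρ x R) * ∫⁻ y in ball ρ x R, h y ∂μ := by
        rw [lintegral_indicator (hX.measurableSet_ball x R),
          lintegral_const_mul' _ _ (by finiteness)]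
    _ = _ := by rw [ENNReal.mul_comm_div]

lemma lintegral_le (hP : IsAveragingKernel ρ μ D R P) (hX : IsQuasiMetricMeasure ρ μ K₀)
    (hL : IsDoubling ρ μ L) (hR : 0 < R) (x : X) : ∫⁻ y, P x y ∂μ ≤ D := by
  simpa [ENNReal.div_self (hL.measure_ball_ne_zero x hR) (hL.measure_ball_ne_top x hR)] using
    hP.lintegral_mul_le hX hL hR x 1

lemma lintegral_mul_rpow_le (hP : IsAveragingKernel ρ μ D R P)
    (hX : IsQuasiMetricMeasure ρ μ K₀) (hL : IsDoubling ρ μ L) (hR : 0 < R) (hq : 0 < q) (x : X)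
    (g : X → ℝ≥0∞) : ∫⁻ y, P x y * g y ^ q ∂μ ≤ D * lpMean ρ μ q g x R ^ q := by
  rw [lpMean, one_div, ENNReal.rpow_inv_rpow hq.ne']
  exact hP.lintegral_mul_le hX hL hR x _

lemma setLIntegral_compl_ball_le (hP : IsAveragingKernel ρ μ D R P)
    (hX : IsQuasiMetricMeasure ρ μ K₀) (hL : IsDoubling ρ μ L) (hR : 0 < R) (hq : 0 < q)
    (hqp : q ≤ p) (hφ : PhiPos φ) {B : ℝ≥0}
    (hB : ∀ x z r s, 0 < r → r ≤ s → ρ x z ≤ r →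
      ENNReal.ofReal (φ x s) ≤ B * ENNReal.ofReal (φ z r))
    (hg : Measurable g) {z : X} {r : ℝ} (hr : 0 < r) (hx : x ∈ ball ρ z r) :
    ∫⁻ y in (ball ρ z (2 * K₀ * r))ᶜ, P x y * g y ^ q ∂μ ≤
      D * (B * morreyNorm ρ μ p φ g * ENNReal.ofReal (φ z r)) ^ q := by
  rcases le_total R r with hRr | hrR
  · have hP0 : ∀ y ∈ (ball ρ z (2 * K₀ * r))ᶜ, P x y * g y ^ q = 0 := by
      intro y hy
      have hyx : y ∉ ball ρ x R := fun hyR =>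
        hy (hX.ball_subset_ball (le_of_lt hx) (by linarith) (ball_mono hRr hyR))
      have hPxy := hP.le_indicator x y
      rw [indicator_of_notMem hyx, le_zero_iff] at hPxy
      rw [hPxy, zero_mul]
    rw [setLIntegral_congr_fun (hX.measurableSet_ball z _).compl hP0, lintegral_zero]
    exact zero_le
  · calc ∫⁻ y in (ball ρ z (2 * K₀ * r))ᶜ, P x y * g y ^ q ∂μ
        ≤ ∫⁻ y, P x y * g y ^ q ∂μ := setLIntegral_le_lintegral _ _
      _ ≤ D * lpMean ρ μ q g x R ^ q := hP.lintegral_mul_rpow_le hX hL hR hq x g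
      _ ≤ D * (B * morreyNorm ρ μ p φ g * ENNReal.ofReal (φ z r)) ^ q := by
          gcongr
          calc lpMean ρ μ q g x R ≤ lpMean ρ μ p g x R :=
                hL.lpMean_le_lpMean_of_exponent_le hR hq hqp hg
            _ ≤ morreyNorm ρ μ p φ g * ENNReal.ofReal (φ x R) := lpMean_le_morreyNorm_mul hφ hR
            _ ≤ morreyNorm ρ μ p φ g * (B * ENNReal.ofReal (φ z r)) := by
                gcongr
                exact hB x z r R hr hrR (le_of_lt (hX.mem_ball_comm.1 hx))
            _ = _ := by ring

end IsAveragingKernel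

variable {p q : ℝ} {g : X → ℝ≥0∞} {z : X} {r : ℝ}

lemma IsDoubling.lpMean_lintegral_mul_le_of_schur_test (hL : IsDoubling ρ μ L)
    {K : X → X → ℝ≥0∞} (hK : Measurable (Function.uncurry K)) {A : ℝ≥0∞} (hA : A ≠ ⊤)
    (hrow : ∀ x, ∫⁻ y, K x y ∂μ ≤ A) (hcol : ∀ y, ∫⁻ x, K x y ∂μ ≤ A) (hq : 0 < q) (hqp : q ≤ p)
    (hg : Measurable g) (hr : 0 < r) {S : Set X} (hS : MeasurableSet S) {N : ℝ≥0∞}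
    (hN : ∫⁻ y in S, g y ^ p ∂μ ≤ N ^ p * μ (ball ρ z r)) :
    lpMean ρ μ p (fun x => (∫⁻ y in S, K x y * g y ^ q ∂μ) ^ (1 / q)) z r ≤ A ^ (1 / q) * N := by
  have := hL.sigmaFinite
  have hp : 0 < p := hq.trans_le hqp
  refine (hL.lpMean_le_iff hp hr).2 ?_
  have hrestrict (x : X) : ∫⁻ y in S, K x y * g y ^ q ∂μ =
      ∫⁻ y, K x y * S.indicator (fun y => g y ^ q) y ∂μ := by
    rw [← lintegral_indicator hS]
    simp only [indicator_mul_right]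
  calc ∫⁻ x in ball ρ z r, ((∫⁻ y in S, K x y * g y ^ q ∂μ) ^ (1 / q)) ^ p ∂μ
      ≤ ∫⁻ x, (∫⁻ y, K x y * S.indicator (fun y => g y ^ q) y ∂μ) ^ (p / q) ∂μ := by
        simp only [← ENNReal.rpow_mul, one_div_mul_eq_div, hrestrict]
        exact setLIntegral_le_lintegral _ _
    _ ≤ A ^ (p / q) * ∫⁻ y, S.indicator (fun y => g y ^ q) y ^ (p / q) ∂μ :=
        lintegral_rpow_le_of_schur_test hK hA hrow hcol ((one_le_div hq).2 hqp)
          ((hg.pow_const q).indicator hS)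
    _ = A ^ (p / q) * ∫⁻ y in S, g y ^ p ∂μ := by
        rw [← lintegral_indicator hS]
        congr 2 with y
        by_cases hy : y ∈ S
        · simp only [indicator_of_mem hy, ← ENNReal.rpow_mul, mul_div_cancel₀ p hq.ne']
        · simp only [indicator_of_notMem hy, ENNReal.zero_rpow_of_pos (div_pos hp hq)]
    _ ≤ A ^ (p / q) * (N ^ p * μ (ball ρ z r)) := by gcongr
    _ = (A ^ (1 / q) * N) ^ p * μ (ball ρ z r) := by
        rw [ENNReal.mul_rpow_of_nonneg _ _ hp.le, ← ENNReal.rpow_mul, one_div_mul_eq_div, mul_assoc]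

lemma IsDoubling.setLIntegral_ball_mul_rpow_le (hL : IsDoubling ρ μ L) (hp : 0 < p)
    (hφ : PhiPos φ) {B D : ℝ≥0} {c : ℝ} (hc : 0 < c) (hr : 0 < r)
    (hB : ENNReal.ofReal (φ z (c * r)) ≤ B * ENNReal.ofReal (φ z r))
    (hD : μ (ball ρ z (c * r)) ≤ D * μ (ball ρ z r)) :
    ∫⁻ y in ball ρ z (c * r), g y ^ p ∂μ ≤
      (D ^ (1 / p) * B * morreyNorm ρ μ p φ g * ENNReal.ofReal (φ z r)) ^ p *
        μ (ball ρ z r) := by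
  have hp' : ((D : ℝ≥0∞) ^ (1 / p)) ^ p = D := by rw [one_div, ENNReal.rpow_inv_rpow hp.ne']
  calc ∫⁻ y in ball ρ z (c * r), g y ^ p ∂μ
      ≤ (morreyNorm ρ μ p φ g * ENNReal.ofReal (φ z (c * r))) ^ p * μ (ball ρ z (c * r)) :=
        (hL.lpMean_le_iff hp (by positivity)).1 (lpMean_le_morreyNorm_mul hφ (by positivity))
    _ ≤ (morreyNorm ρ μ p φ g * (B * ENNReal.ofReal (φ z r))) ^ p *
          (D * μ (ball ρ z r)) := by gcongr
    _ = (D ^ (1 / p) * (morreyNorm ρ μ p φ g * (B * ENNReal.ofReal (φ z r)))) ^ p *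
          μ (ball ρ z r) := by
        rw [ENNReal.mul_rpow_of_nonneg (D ^ (1 / p)) _ hp.le, hp']; ring
    _ = _ := by ring_nf

section Multiscale

/-- Superposition, with weights `w k`, of the kernels `P k` at different scales; it majorizes the
part of the kernel `(U ρ ^ (s q))⁻¹` away from the diagonal. -/
def multiscaleKernel (w : ℕ → ℝ≥0∞) (P : ℕ → X → X → ℝ≥0∞) (x y : X) : ℝ≥0∞ :=
  ∑' k, w k * P k x y

variable {D : ℝ≥0} {R : ℕ → ℝ} {P : ℕ → X → X → ℝ≥0∞} {w : ℕ → ℝ≥0∞}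

lemma measurable_multiscaleKernel (hP : ∀ k, IsAveragingKernel ρ μ D (R k) (P k)) :
    Measurable (Function.uncurry (multiscaleKernel w P)) :=
  .tsum fun k => (hP k).measurable.const_mul (w k)

lemma lintegral_multiscaleKernel_mul (hP : ∀ k, IsAveragingKernel ρ μ D (R k) (P k))
    (ν : Measure X) (x : X) {h : X → ℝ≥0∞} (hh : Measurable h) :
    ∫⁻ y, multiscaleKernel w P x y * h y ∂ν = ∑' k, w k * ∫⁻ y, P k x y * h y ∂ν := by
  have hPh (k : ℕ) : Measurable fun y => P k x y * h y := (hP k).measurable.of_uncurry_left.mul hh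
  simp only [multiscaleKernel, ← ENNReal.tsum_mul_right, mul_assoc]
  rw [lintegral_tsum fun k => ((hPh k).const_mul (w k)).aemeasurable]
  simp only [lintegral_const_mul _ (hPh _)]

lemma lintegral_multiscaleKernel_le (hX : IsQuasiMetricMeasure ρ μ K₀) (hL : IsDoubling ρ μ L)
    (hP : ∀ k, IsAveragingKernel ρ μ D (R k) (P k)) (hR : ∀ k, 0 < R k) (x : X) :
    ∫⁻ y, multiscaleKernel w P x y ∂μ ≤ D * ∑' k, w k := by
  have h := lintegral_multiscaleKernel_mul (w := w) hP μ x measurable_one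
  simp only [Pi.one_apply, mul_one] at h
  rw [h, mul_comm, ← ENNReal.tsum_mul_right]
  gcongr with k
  exact (hP k).lintegral_le hX hL (hR k) x

lemma multiscaleKernel_symm (hP : ∀ k, IsAveragingKernel ρ μ D (R k) (P k)) (x y : X) :
    multiscaleKernel w P x y = multiscaleKernel w P y x :=
  tsum_congr fun k => by rw [(hP k).symm]

lemma lpMean_setLIntegral_ball_multiscaleKernel_le (hX : IsQuasiMetricMeasure ρ μ K₀)
    (hL : IsDoubling ρ μ L) (hP : ∀ k, IsAveragingKernel ρ μ D (R k) (P k)) (hR : ∀ k, 0 < R k)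
    (hw : ∑' k, w k ≠ ⊤) (hq : 0 < q) (hqp : q ≤ p) (hφ : PhiPos φ) {B D' : ℝ≥0} {c : ℝ}
    (hc : 0 < c) (hr : 0 < r) (hB : ENNReal.ofReal (φ z (c * r)) ≤ B * ENNReal.ofReal (φ z r))
    (hD' : μ (ball ρ z (c * r)) ≤ D' * μ (ball ρ z r)) (hg : Measurable g) :
    lpMean ρ μ p (fun x =>
        (∫⁻ y in ball ρ z (c * r), multiscaleKernel w P x y * g y ^ q ∂μ) ^ (1 / q)) z r ≤
      (D * ∑' k, w k) ^ (1 / q) *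
        (D' ^ (1 / p) * B * morreyNorm ρ μ p φ g * ENNReal.ofReal (φ z r)) := by
  have hrow (x : X) := lintegral_multiscaleKernel_le (w := w) hX hL hP hR x
  refine hL.lpMean_lintegral_mul_le_of_schur_test (measurable_multiscaleKernel hP) (by finiteness)
    hrow (fun y => ?_) hq hqp hg hr (hX.measurableSet_ball z _)
    (hL.setLIntegral_ball_mul_rpow_le (hq.trans_le hqp) hφ hc hr hB hD')
  simpa only [multiscaleKernel_symm hP _ y] using hrow y

lemma setLIntegral_compl_ball_multiscaleKernel_rpow_le (hX : IsQuasiMetricMeasure ρ μ K₀)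
    (hL : IsDoubling ρ μ L) (hP : ∀ k, IsAveragingKernel ρ μ D (R k) (P k)) (hR : ∀ k, 0 < R k)
    (hq : 0 < q) (hqp : q ≤ p) (hφ : PhiPos φ) {B : ℝ≥0}
    (hB : ∀ x z r s, 0 < r → r ≤ s → ρ x z ≤ r →
      ENNReal.ofReal (φ x s) ≤ B * ENNReal.ofReal (φ z r))
    (hg : Measurable g) (hr : 0 < r) {x : X} (hx : x ∈ ball ρ z r) :
    (∫⁻ y in (ball ρ z (2 * K₀ * r))ᶜ, multiscaleKernel w P x y * g y ^ q ∂μ) ^ (1 / q) ≤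
      (D * ∑' k, w k) ^ (1 / q) * (B * morreyNorm ρ μ p φ g * ENNReal.ofReal (φ z r)) := by
  have hq' : 0 ≤ 1 / q := by positivity
  set N := B * morreyNorm ρ μ p φ g * ENNReal.ofReal (φ z r)
  calc (∫⁻ y in (ball ρ z (2 * K₀ * r))ᶜ, multiscaleKernel w P x y * g y ^ q ∂μ) ^ (1 / q)
      ≤ (D * (∑' k, w k) * N ^ q) ^ (1 / q) := by
        rw [lintegral_multiscaleKernel_mul hP _ x (hg.pow_const q), mul_right_comm (D : ℝ≥0∞),
          mul_comm (D * N ^ q), ← ENNReal.tsum_mul_right]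
        gcongr with k
        exact (hP k).setLIntegral_compl_ball_le hX hL (hR k) hq hqp hφ hB hg hr hx
    _ = (D * ∑' k, w k) ^ (1 / q) * N := by
        rw [ENNReal.mul_rpow_of_nonneg _ _ hq', one_div, ENNReal.rpow_rpow_inv hq.ne']

lemma lpMean_multiscaleKernel_le (hX : IsQuasiMetricMeasure ρ μ K₀) (hL : IsDoubling ρ μ L)
    (hP : ∀ k, IsAveragingKernel ρ μ D (R k) (P k)) (hR : ∀ k, 0 < R k) (hw : ∑' k, w k ≠ ⊤)
    (hq : 0 < q) (hqp : q ≤ p) (hφ : PhiPos φ) {B D' : ℝ≥0}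
    (hB : ∀ x z r s, 0 < r → r ≤ s → ρ x z ≤ r →
      ENNReal.ofReal (φ x s) ≤ B * ENNReal.ofReal (φ z r))
    (hD' : ∀ x y r, 0 < r → ρ x y ≤ 2 * K₀ * r → μ (ball ρ x (2 * K₀ * r)) ≤ D' * μ (ball ρ y r))
    (hg : Measurable g) (hr : 0 < r) :
    lpMean ρ μ p (fun x => (∫⁻ y, multiscaleKernel w P x y * g y ^ q ∂μ) ^ (1 / q)) z r ≤
      2 ^ (1 / q) * (2 * 2 ^ (1 / p)) * D ^ (1 / q) * (D' ^ (1 / p) * B + B) *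
        (∑' k, w k) ^ (1 / q) * morreyNorm ρ μ p φ g * ENNReal.ofReal (φ z r) := by
  have hp : 0 < p := hq.trans_le hqp
  have hK := hX.one_le
  have hrK : r ≤ 2 * K₀ * r := le_mul_of_one_le_left hr.le (by linarith)
  have hzz : ρ z z ≤ r := (hX.dist_self z).trans_le hr.le
  have hq' : 0 ≤ 1 / q := by positivity
  set near := fun x =>
    (∫⁻ y in ball ρ z (2 * K₀ * r), multiscaleKernel w P x y * g y ^ q ∂μ) ^ (1 / q)
  set far := (D * ∑' k, w k) ^ (1 / q) * (B * morreyNorm ρ μ p φ g * ENNReal.ofReal (φ z r))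
  have hnear_far : ∀ x ∈ ball ρ z r,
      (∫⁻ y, multiscaleKernel w P x y * g y ^ q ∂μ) ^ (1 / q) ≤ 2 ^ (1 / q) * (far + near x) := by
    intro x hx
    rw [add_comm far, ← lintegral_add_compl _ (hX.measurableSet_ball z (2 * K₀ * r))]
    refine (add_rpow_le_two_rpow_mul _ _ hq').trans ?_
    gcongr
    exact setLIntegral_compl_ball_multiscaleKernel_rpow_le hX hL hP hR hq hqp hφ hB hg hr hx
  calc lpMean ρ μ p (fun x => (∫⁻ y, multiscaleKernel w P x y * g y ^ q ∂μ) ^ (1 / q)) z r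
      ≤ 2 ^ (1 / q) * (2 * 2 ^ (1 / p) * (far + lpMean ρ μ p near z r)) :=
        hL.lpMean_le_of_le_const_mul_add hX hp hr (by finiteness) hnear_far
    _ ≤ 2 ^ (1 / q) * (2 * 2 ^ (1 / p) * (far + (D * ∑' k, w k) ^ (1 / q) * (D' ^ (1 / p) * B *
          morreyNorm ρ μ p φ g * ENNReal.ofReal (φ z r)))) := by
        gcongr
        exact lpMean_setLIntegral_ball_multiscaleKernel_le hX hL hP hR hw hq hqp hφ (by positivity)
          hr (hB z z r _ hr hrK hzz) (hD' z z r hr (hzz.trans hrK)) hg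
    _ = _ := by
        simp only [far, ENNReal.mul_rpow_of_nonneg _ _ hq']
        ring

end Multiscale

variable {Ω : Set X} {f : X → ℝ} {D : ℝ≥0} {s s₀ : ℝ} {P : ℕ → X → X → ℝ≥0∞}

lemma inv_U_mul_le_multiscaleKernel (hsq : 0 ≤ s * q)
    (hU : ∀ k x y, 2 ^ k ≤ ρ x y → ρ x y < 2 * 2 ^ k → (U ρ μ x y)⁻¹ ≤ P k x y) {x y : X}
    (hxy : 1 ≤ ρ x y) : (U ρ μ x y * ENNReal.ofReal (ρ x y) ^ (s * q))⁻¹ ≤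
      multiscaleKernel (fun k => ENNReal.ofReal (2 ^ k) ^ (-(s * q))) P x y := by
  obtain ⟨k, hk, hk'⟩ := exists_nat_pow_near hxy one_lt_two
  have hρ : 0 < ENNReal.ofReal (ρ x y) := ENNReal.ofReal_pos.2 (by positivity)
  calc (U ρ μ x y * ENNReal.ofReal (ρ x y) ^ (s * q))⁻¹
      = (ENNReal.ofReal (ρ x y) ^ (s * q))⁻¹ * (U ρ μ x y)⁻¹ := by
        rw [ENNReal.mul_inv (.inr (by finiteness)) (.inr (ENNReal.rpow_pos hρ (by finiteness)).ne'),
          mul_comm]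
    _ ≤ ENNReal.ofReal (2 ^ k) ^ (-(s * q)) * P k x y := by
        rw [ENNReal.rpow_neg]
        gcongr
        exact hU k x y hk (by rwa [pow_succ'] at hk')
    _ ≤ _ := ENNReal.le_tsum k

lemma sobIntegrand_le_add_multiscaleKernel (hq : 0 ≤ q) (hs : 0 ≤ s) (hss₀ : s ≤ s₀)
    (hU : ∀ k x y, 2 ^ k ≤ ρ x y → ρ x y < 2 * 2 ^ k → (U ρ μ x y)⁻¹ ≤ P k x y) (x y : X) :
    sobIntegrand ρ μ f q s x y ≤ sobIntegrand ρ μ f q s₀ x y +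
      2 ^ q * (multiscaleKernel (fun k => ENNReal.ofReal (2 ^ k) ^ (-(s * q))) P x y *
        (ENNReal.ofReal |f x| ^ q + ENNReal.ofReal |f y| ^ q)) := by
  rcases le_total (ρ x y) 1 with hnear | hfar
  · refine le_add_right ?_
    unfold sobIntegrand
    gcongr _ / (_ * ?_)
    exact ENNReal.rpow_le_rpow_of_exponent_ge (ENNReal.ofReal_le_one.2 hnear) (by gcongr)
  · refine le_add_left ?_
    rw [sobIntegrand, div_eq_mul_inv, mul_left_comm, mul_comm]
    gcongr
    · exact inv_U_mul_le_multiscaleKernel (by positivity) hU hfar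
    · refine le_trans ?_ (add_rpow_le_two_rpow_mul _ _ hq)
      rw [← ENNReal.ofReal_add (abs_nonneg _) (abs_nonneg _)]
      gcongr
      exact abs_sub _ _

lemma sob_rpow_le_add_multiscaleKernel (hX : IsQuasiMetricMeasure ρ μ K₀)
    (hL : IsDoubling ρ μ L) (hΩ : MeasurableSet Ω) (hf : Measurable f) {R : ℕ → ℝ}
    (hP : ∀ k, IsAveragingKernel ρ μ D (R k) (P k)) (hR : ∀ k, 0 < R k) (hq : 0 < q) (hs : 0 ≤ s)
    (hss₀ : s ≤ s₀)
    (hU : ∀ k x y, 2 ^ k ≤ ρ x y → ρ x y < 2 * 2 ^ k → (U ρ μ x y)⁻¹ ≤ P k x y) (x : X) :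
    let w := fun k : ℕ => ENNReal.ofReal (2 ^ k) ^ (-(s * q))
    sob ρ μ Ω f q s x ^ q ≤ 2 ^ q * (D * (∑' k, w k) * ENNReal.ofReal |f x| ^ q +
        ∫⁻ y, multiscaleKernel w P x y * Ω.indicator (fun y => ENNReal.ofReal |f y|) y ^ q ∂μ) +
      sob ρ μ Ω f q s₀ x ^ q := by
  intro w
  have hK : Measurable (multiscaleKernel w P x) :=
    (measurable_multiscaleKernel hP).of_uncurry_left
  rw [sob_rpow hq, sob_rpow hq]
  calc ∫⁻ y in Ω, sobIntegrand ρ μ f q s x y ∂μ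
      ≤ ∫⁻ y in Ω, 2 ^ q * (multiscaleKernel w P x y * ENNReal.ofReal |f x| ^ q +
          multiscaleKernel w P x y * ENNReal.ofReal |f y| ^ q) ∂μ +
          ∫⁻ y in Ω, sobIntegrand ρ μ f q s₀ x y ∂μ := by
        rw [← lintegral_add_left (by fun_prop)]
        refine lintegral_mono fun y => ?_
        rw [← mul_add, add_comm]
        exact sobIntegrand_le_add_multiscaleKernel hq.le hs hss₀ hU x y
    _ = 2 ^ q * ((∫⁻ y in Ω, multiscaleKernel w P x y ∂μ) * ENNReal.ofReal |f x| ^ q +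
          ∫⁻ y in Ω, multiscaleKernel w P x y *
            Ω.indicator (fun y => ENNReal.ofReal |f y|) y ^ q ∂μ) +
          ∫⁻ y in Ω, sobIntegrand ρ μ f q s₀ x y ∂μ := by
        rw [lintegral_const_mul' _ _ (by finiteness), lintegral_add_left (by fun_prop),
          lintegral_mul_const _ hK]
        congr 3
        exact setLIntegral_congr_fun hΩ fun y hy => by rw [indicator_of_mem hy]
    _ ≤ _ := by
        gcongr
        · exact (setLIntegral_le_lintegral _ _).trans
            (lintegral_multiscaleKernel_le hX hL hP hR x)
        · exact Measure.restrict_le_self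

lemma indicator_sob_le_of_kernels (hX : IsQuasiMetricMeasure ρ μ K₀)
    (hL : IsDoubling ρ μ L) (hΩ : MeasurableSet Ω) (hf : Measurable f) {R : ℕ → ℝ}
    (hP : ∀ k, IsAveragingKernel ρ μ D (R k) (P k)) (hR : ∀ k, 0 < R k) (hq : 0 < q) (hs : 0 ≤ s)
    (hss₀ : s ≤ s₀)
    (hU : ∀ k x y, 2 ^ k ≤ ρ x y → ρ x y < 2 * 2 ^ k → (U ρ μ x y)⁻¹ ≤ P k x y) (x : X) :
    let w := fun k : ℕ => ENNReal.ofReal (2 ^ k) ^ (-(s * q))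
    let g := Ω.indicator fun x => ENNReal.ofReal |f x|
    Ω.indicator (sob ρ μ Ω f q s) x ≤ (2 ^ q * 2 * 2) ^ (1 / q) *
      ((D * ∑' k, w k) ^ (1 / q) * g x +
        ((∫⁻ y, multiscaleKernel w P x y * g y ^ q ∂μ) ^ (1 / q) +
          Ω.indicator (sob ρ μ Ω f q s₀) x)) := by
  intro w g
  by_cases hx : x ∈ Ω
  · have hgx : g x = ENNReal.ofReal |f x| := indicator_of_mem hx _
    rw [indicator_of_mem hx, indicator_of_mem hx]
    set I := ∫⁻ y, multiscaleKernel w P x y * g y ^ q ∂μ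
    set S₀ := sob ρ μ Ω f q s₀ x
    have hI : I = (I ^ (1 / q)) ^ q := by rw [one_div, ENNReal.rpow_inv_rpow hq.ne']
    have hI_le : I ≤ (I ^ (1 / q) + S₀) ^ q := by
      nth_rw 1 [hI]
      gcongr
      exact le_self_add
    have hS₀_le : S₀ ^ q ≤ 2 ^ q * (I ^ (1 / q) + S₀) ^ q := by
      refine le_trans ?_ (le_mul_of_one_le_left' (ENNReal.one_le_rpow one_le_two hq))
      gcongr
      exact le_add_self
    refine le_of_rpow_le_mul_add_rpow hq ?_
    calc sob ρ μ Ω f q s x ^ q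
        ≤ 2 ^ q * (D * (∑' k, w k) * g x ^ q + I) + S₀ ^ q := by
          rw [hgx]
          exact sob_rpow_le_add_multiscaleKernel hX hL hΩ hf hP hR hq hs hss₀ hU x
      _ ≤ 2 ^ q * (D * (∑' k, w k) * g x ^ q + (I ^ (1 / q) + S₀) ^ q) +
            2 ^ q * (D * (∑' k, w k) * g x ^ q + (I ^ (1 / q) + S₀) ^ q) := by
          gcongr
          exact hS₀_le.trans (by gcongr; exact le_add_self)
      _ = _ := by ring
  · rw [indicator_of_notMem hx]
    exact zero_le

lemma morreyNorm_indicator_sob_le_of_kernels (hX : IsQuasiMetricMeasure ρ μ K₀)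
    (hL : IsDoubling ρ μ L) (hΩ : MeasurableSet Ω) (hf : Measurable f) {R : ℕ → ℝ}
    (hP : ∀ k, IsAveragingKernel ρ μ D (R k) (P k)) (hR : ∀ k, 0 < R k) (hq : 0 < q) (hp : 0 < p)
    (hφ : PhiPos φ) (hs : 0 ≤ s) (hss₀ : s ≤ s₀)
    (hU : ∀ k x y, 2 ^ k ≤ ρ x y → ρ x y < 2 * 2 ^ k → (U ρ μ x y)⁻¹ ≤ P k x y)
    (hW : ∑' k : ℕ, ENNReal.ofReal (2 ^ k) ^ (-(s * q)) ≠ ⊤) :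
    let w := fun k : ℕ => ENNReal.ofReal (2 ^ k) ^ (-(s * q))
    let g := Ω.indicator fun x => ENNReal.ofReal |f x|
    morreyNorm ρ μ p φ (Ω.indicator (sob ρ μ Ω f q s)) ≤ (2 ^ q * 2 * 2) ^ (1 / q) *
      (2 * 2 ^ (1 / p) * ((D * ∑' k, w k) ^ (1 / q) * morreyNorm ρ μ p φ g + 2 * 2 ^ (1 / p) *
        (morreyNorm ρ μ p φ (fun x => (∫⁻ y, multiscaleKernel w P x y * g y ^ q ∂μ) ^ (1 / q)) +
          morreyNorm ρ μ p φ (Ω.indicator (sob ρ μ Ω f q s₀))))) := by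
  intro w g
  have := hL.sigmaFinite
  have hg : Measurable g := hf.abs.ennreal_ofReal.indicator hΩ
  have hT : Measurable fun x => (∫⁻ y, multiscaleKernel w P x y * g y ^ q ∂μ) ^ (1 / q) :=
    (((measurable_multiscaleKernel hP).mul
      ((hg.pow_const q).comp measurable_snd)).lintegral_prod_right').pow_const _
  refine (morreyNorm_mono hp.le
    (indicator_sob_le_of_kernels hX hL hΩ hf hP hR hq hs hss₀ hU)).trans ?_
  rw [morreyNorm_const_mul hp (by finiteness)]
  gcongr
  exact morreyNorm_const_mul_add_add_le hφ hp hg hT (by finiteness)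

lemma IsDoubling.exists_morreyNorm_sob_le (hL : IsDoubling ρ μ L)
    (hX : IsQuasiMetricMeasure ρ μ K₀) (hΩ : MeasurableSet Ω) (hq : 0 < q) (hqp : q ≤ p)
    (hφ : PhiPos φ) (hφD : AlmostDecreasing φ) (hφN : Nearness ρ φ) :
    ∃ C : ℝ≥0∞, C ≠ ⊤ ∧ ∀ f, Measurable f → ∀ s s₀, 0 ≤ s → s ≤ s₀ →
      let W := ∑' k : ℕ, ENNReal.ofReal (2 ^ k) ^ (-(s * q))
      W ≠ ⊤ → morreyNorm ρ μ p φ (Ω.indicator (sob ρ μ Ω f q s)) ≤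
        C * (morreyNorm ρ μ p φ (Ω.indicator (sob ρ μ Ω f q s₀)) +
          W ^ (1 / q) * morreyNorm ρ μ p φ (Ω.indicator fun x => ENNReal.ofReal |f x|)) := by
  have hp : 0 < p := hq.trans_le hqp
  have hq' : 0 ≤ 1 / q := by positivity
  obtain ⟨D, c, hc, hkernel⟩ := hL.exists_isAveragingKernel hX
  choose P hP hU using fun k : ℕ => hkernel (2 ^ k) (by positivity)
  obtain ⟨B, hB⟩ := hφD.exists_ofReal_le_mul hφN
  obtain ⟨D', hD'⟩ := hL.exists_measure_ball_mul_le hX (2 * K₀)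
  set κ : ℝ≥0∞ := 2 * 2 ^ (1 / p)
  set a : ℝ≥0∞ := (2 ^ q * 2 * 2) ^ (1 / q)
  set E : ℝ≥0∞ := 2 ^ (1 / q) * κ * D ^ (1 / q) * (D' ^ (1 / p) * B + B)
  set A : ℝ≥0∞ := D ^ (1 / q) + κ * E
  refine ⟨a * κ * (A + κ), by finiteness, ?_⟩
  intro f hf s s₀ hs hss₀ W hW
  have hR (k : ℕ) : 0 < c * 2 ^ k := by positivity
  have hg : Measurable (Ω.indicator fun x => ENNReal.ofReal |f x|) :=
    hf.abs.ennreal_ofReal.indicator hΩ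
  set N := morreyNorm ρ μ p φ (Ω.indicator fun x => ENNReal.ofReal |f x|)
  set N₀ := morreyNorm ρ μ p φ (Ω.indicator (sob ρ μ Ω f q s₀))
  calc morreyNorm ρ μ p φ (Ω.indicator (sob ρ μ Ω f q s))
      ≤ a * (κ * ((D * W) ^ (1 / q) * N + κ * (E * W ^ (1 / q) * N + N₀))) := by
        refine (morreyNorm_indicator_sob_le_of_kernels hX hL hΩ hf hP hR hq hp hφ hs
          hss₀ hU hW).trans ?_
        gcongr
        exact (morreyNorm_le_iff hφ).2 fun z r hr =>
          lpMean_multiscaleKernel_le hX hL hP hR hW hq hqp hφ hB hD' hg hr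
    _ = a * κ * (A * (W ^ (1 / q) * N) + κ * N₀) := by
        rw [ENNReal.mul_rpow_of_nonneg _ _ hq']
        simp only [A]
        ring
    _ ≤ a * κ * ((A + κ) * (W ^ (1 / q) * N) + (A + κ) * N₀) := by
        gcongr
        · exact le_self_add
        · exact le_add_self
    _ = _ := by ring

lemma tendsto_ofReal_rpow_nhdsGT_zero (hq : 0 < q) :
    Tendsto (fun s : ℝ => ENNReal.ofReal s ^ q) (𝓝[>] 0) (𝓝 0) := by
  have h := (ENNReal.continuous_ofReal.tendsto 0).ennrpow_const q
  rw [ENNReal.ofReal_zero, ENNReal.zero_rpow_of_pos hq] at h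
  exact h.mono_left nhdsWithin_le_nhds

lemma IsDoubling.exists_limsup_le_mul_morreyNorm (hL : IsDoubling ρ μ L)
    (hX : IsQuasiMetricMeasure ρ μ K₀) (hΩ : MeasurableSet Ω) (hq : 0 < q) (hqp : q ≤ p)
    (hφ : PhiPos φ) (hφD : AlmostDecreasing φ) (hφN : Nearness ρ φ) :
    ∃ C : ℝ≥0, 0 < C ∧ ∀ f, Measurable f → ∀ s₀, 0 < s₀ →
      morreyNorm ρ μ p φ (Ω.indicator (sob ρ μ Ω f q s₀)) ≠ ⊤ →
      limsup (fun s : ℝ => ENNReal.ofReal s ^ (1 / q) *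
          morreyNorm ρ μ p φ (Ω.indicator (sob ρ μ Ω f q s))) (𝓝[>] 0) ≤
        C * morreyNorm ρ μ p φ (Ω.indicator fun x => ENNReal.ofReal |f x|) := by
  obtain ⟨C, hC, hsob⟩ := hL.exists_morreyNorm_sob_le hX hΩ hq hqp hφ hφD hφN
  have hq' : 0 < 1 / q := by positivity
  have hlim := tendsto_mul_tsum_mul_pow_rpow_neg one_pos one_lt_two hq
  simp only [one_mul] at hlim
  set W := fun s : ℝ => ∑' k : ℕ, ENNReal.ofReal (2 ^ k) ^ (-(s * q))
  set v := ENNReal.ofReal (q * Real.log 2)⁻¹ ^ (1 / q)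
  refine ⟨(C * v).toNNReal + 1, by positivity, fun f hf s₀ hs₀ hS₀ => ?_⟩
  set N := morreyNorm ρ μ p φ (Ω.indicator fun x => ENNReal.ofReal |f x|)
  set S₀ := morreyNorm ρ μ p φ (Ω.indicator (sob ρ μ Ω f q s₀))
  rcases eq_or_ne N ⊤ with hN | hN
  · simp [hN]
  have hbound : ∀ᶠ s in 𝓝[>] (0 : ℝ), ENNReal.ofReal s ^ (1 / q) *
      morreyNorm ρ μ p φ (Ω.indicator (sob ρ μ Ω f q s)) ≤
        C * S₀ * ENNReal.ofReal s ^ (1 / q) + C * (ENNReal.ofReal s * W s) ^ (1 / q) * N := by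
    filter_upwards [Ioo_mem_nhdsGT hs₀, hlim.eventually_lt_const ENNReal.ofReal_lt_top]
      with s ⟨hs, hss₀⟩ hsW
    have hW : W s ≠ ⊤ :=
      (ENNReal.lt_top_of_mul_ne_top_right hsW.ne (ENNReal.ofReal_pos.2 hs).ne').ne
    calc _ ≤ ENNReal.ofReal s ^ (1 / q) * (C * (S₀ + W s ^ (1 / q) * N)) := by
          gcongr
          exact hsob f hf s s₀ hs.le hss₀.le hW
      _ = _ := by rw [ENNReal.mul_rpow_of_nonneg _ _ hq'.le]; ring
  have hbound_lim : Tendsto (fun s : ℝ => C * S₀ * ENNReal.ofReal s ^ (1 / q) +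
      C * (ENNReal.ofReal s * W s) ^ (1 / q) * N) (𝓝[>] 0) (𝓝 (C * S₀ * 0 + C * v * N)) :=
    (ENNReal.Tendsto.const_mul (tendsto_ofReal_rpow_nhdsGT_zero hq') (.inr (by finiteness))).add
      (ENNReal.Tendsto.mul_const (ENNReal.Tendsto.const_mul (hlim.ennrpow_const _) (.inr hC))
        (.inr hN))
  calc _ ≤ C * S₀ * 0 + C * v * N := (limsup_le_limsup hbound).trans_eq hbound_lim.limsup_eq
    _ ≤ _ := by
      rw [mul_zero, zero_add, ENNReal.coe_add, ENNReal.coe_toNNReal (by finiteness)]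
      gcongr
      exact le_self_add

end UpperBound

theorem statement19_general (ρ : X → X → ℝ) (μ : Measure X) (K₀ : ℝ) (L : ℝ≥0∞)
    (hX : IsQuasiMetricMeasure ρ μ K₀) (hL : IsDoubling ρ μ L) (hWRD : WRD ρ μ)
    (Ω : Set X) (hΩ : MeasurableSet Ω) (hWMD : WMD ρ μ Ω) (p q : ℝ) (hq : 0 < q) (hqp : q ≤ p)
    (φ : X → ℝ → ℝ) (hφ : PhiPos φ) (hφD : AlmostDecreasing φ) (hφN : Nearness ρ φ)
    (hφ0 : ∀ x, Tendsto (φ x) atTop (𝓝 0)) :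
    ∃ C C' : ℝ≥0, 0 < C ∧ 0 < C' ∧ ∀ f : X → ℝ, Measurable f →
      ((⨅ a : ℝ, morreyNorm ρ μ p φ (Ω.indicator fun x => ENNReal.ofReal |f x + a|)) < ∞ →
        C * (⨅ a : ℝ, morreyNorm ρ μ p φ (Ω.indicator fun x => ENNReal.ofReal |f x + a|)) ≤
          liminf (fun s : ℝ => ENNReal.ofReal s ^ (1 / q) *
            morreyNorm ρ μ p φ (Ω.indicator (sob ρ μ Ω f q s))) (𝓝[>] 0)) ∧
      ((∃ s₀ > 0, morreyNorm ρ μ p φ (Ω.indicator (sob ρ μ Ω f q s₀)) < ∞) →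
        limsup (fun s : ℝ => ENNReal.ofReal s ^ (1 / q) *
            morreyNorm ρ μ p φ (Ω.indicator (sob ρ μ Ω f q s))) (𝓝[>] 0) ≤
          C' * (⨅ a : ℝ, morreyNorm ρ μ p φ (Ω.indicator fun x => ENNReal.ofReal |f x + a|))) := by
  obtain ⟨C, hC, hlower⟩ := hWMD.exists_mul_morreyNorm_le_liminf hWRD hX hL hΩ hq hqp hφ hφ0
  obtain ⟨C', hC', hupper⟩ := hL.exists_limsup_le_mul_morreyNorm hX hΩ hq hqp hφ hφD hφN
  refine ⟨C, C', hC, hC', fun f hf => ⟨fun hfin => ?_, fun ⟨s₀, hs₀, hS₀⟩ => ?_⟩⟩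
  · obtain ⟨a, ha⟩ := iInf_lt_iff.1 hfin
    have h := hlower (fun x => f x + a) (hf.add_const a) ha.ne
    simp only [sob_add_const] at h
    exact (mul_le_mul_right (iInf_le _ a) _).trans h
  · rw [ENNReal.mul_iInf_of_ne (by positivity) ENNReal.coe_ne_top]
    refine le_iInf fun a => ?_
    have h := hupper (fun x => f x + a) (hf.add_const a) s₀ hs₀
    simp only [sob_add_const] at h
    exact h hS₀.ne

theorem statement19 [Nonempty X] (ρ : X → X → ℝ) (μ : Measure X) (K₀ : ℝ) (L : ℝ≥0∞)
    (hX : IsQuasiMetricMeasure ρ μ K₀) (hL : IsDoubling ρ μ L) (hWRD : WRD ρ μ)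
    (Ω : Set X) (hΩm : MeasurableSet Ω) (hΩo : IsRhoOpen ρ Ω) (hWMD : WMD ρ μ Ω)
    (p q : ℝ) (hq : 0 < q) (hqp : q < p)
    (φ : X → ℝ → ℝ) (hφpos : PhiPos φ) (hφG : GdecP ρ μ p φ) (hφN : Nearness ρ φ)
    (Cφ : ℝ) (hφI : PhiIntCond φ Cφ)
    (halt :
      (∃ C : ℝ, 1 ≤ C ∧ ∀ (x : X) (r : ℝ), 0 < r →
          ENNReal.ofReal (1 / C) ≤ ENNReal.ofReal (φ x r) * μ (ball ρ x r) ^ (1 / p) ∧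
          ENNReal.ofReal (φ x r) * μ (ball ρ x r) ^ (1 / p) ≤ ENNReal.ofReal C) ∨
        ((∀ (z : X) (R : ℝ), 0 < R → ∀ M : ℝ, ∃ δ : ℝ, 0 < δ ∧
            ∀ r : ℝ, 0 < r → r < δ → ∀ x ∈ ball ρ z R, M ≤ φ x r) ∧
          ∀ x : X,
            Tendsto (fun r : ℝ => ENNReal.ofReal (φ x r) * μ (ball ρ x r) ^ (1 / p))
              atTop (𝓝 ⊤))) :
    ∃ C C' : ℝ≥0, 0 < C ∧ 0 < C' ∧
      ∀ f : X → ℝ, Measurable f →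
        (⨅ a : ℝ, morreyNorm ρ μ p φ (Ω.indicator fun x => ENNReal.ofReal |f x + a|)) < ∞ →
        (∃ s₀ ∈ Set.Ioo (0:ℝ) 1, morreyNorm ρ μ p φ (Ω.indicator (sob ρ μ Ω f q s₀)) < ∞) →
        (C : ℝ≥0∞) * (⨅ a : ℝ, morreyNorm ρ μ p φ (Ω.indicator fun x => ENNReal.ofReal |f x + a|)) ≤
            liminf (fun s : ℝ => ENNReal.ofReal s ^ (1 / q) * morreyNorm ρ μ p φ (Ω.indicator (sob ρ μ Ω f q s)))
              (𝓝[>] (0:ℝ)) ∧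
          limsup (fun s : ℝ => ENNReal.ofReal s ^ (1 / q) * morreyNorm ρ μ p φ (Ω.indicator (sob ρ μ Ω f q s)))
              (𝓝[>] (0:ℝ)) ≤
            (C' : ℝ≥0∞) * (⨅ a : ℝ, morreyNorm ρ μ p φ (Ω.indicator fun x => ENNReal.ofReal |f x + a|)) := by
  obtain ⟨C, C', hC, hC', h⟩ := statement19_general ρ μ K₀ L hX hL hWRD Ω hΩm hWMD p q hq hqp.le φ
    hφpos hφG.almostDecreasing hφN fun x =>
      hφG.almostDecreasing.tendsto_atTop_zero hφpos (hφI x 1 one_pos).1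
  exact ⟨C, C', hC, hC', fun f hf hfin ⟨s₀, hs₀, hS₀⟩ =>
    ⟨(h f hf).1 hfin, (h f hf).2 ⟨s₀, hs₀.1, hS₀⟩⟩⟩

end Paper
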